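/- Let n ≥ 2 and s ∈ (0,1). Let 𝕋ⁿ := 𝕊¹ × ⋯ × 𝕊¹ (n factors) ⊂ ℝ^{2n} be the flat n-torus, equipped with the n-dimensional Hausdorff measure ν on 𝕋ⁿ and the Euclidean distance of ℝ^{2n}, and let 𝕊¹ ⊂ ℝ² be the unit circle. Then for every continuous map u₀ : 𝕋ⁿ → 𝕊¹ there exists a continuous map u : 𝕋ⁿ → 𝕊¹ homotopic to u₀ with E_{s,n/s}(u) := ∫_{𝕋ⁿ}∫_{𝕋ⁿ} |u(x)−u(y)|^{n/s}/|x−y|^{2n} dν(x) dν(y) < ∞ and such that E_{s,n/s}(u) ≤ E_{s,n/s}(v) for every continuous map v : 𝕋ⁿ → 𝕊¹ homotopic to u₀. (This is the instance 𝒩 = 𝕊¹, Σ = 𝕋ⁿ of the existence theorem for minimizers in every homotopy class when πₙ(𝒩) = 0.) -/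

import Mathlib

open MeasureTheory
open scoped ENNReal

noncomputable section

/-- The unit circle `𝕊¹ ⊆ ℝ²`. -/
abbrev Circ : Type _ := ↥(Metric.sphere (0 : EuclideanSpace ℝ (Fin 2)) 1)

/-- The flat `n`-torus `𝕋ⁿ = 𝕊¹ × ⋯ × 𝕊¹ ⊆ ℝ^{2n}`, as a subset of the Euclidean space
`ℝ^{Fin n × Fin 2} ≅ ℝ^{2n}`: the `i`-th pair of coordinates lies on the unit circle. -/
def TorusSet (n : ℕ) : Set (EuclideanSpace ℝ (Fin n × Fin 2)) :=
  {x | ∀ i : Fin n, (x (i, 0)) ^ 2 + (x (i, 1)) ^ 2 = 1}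

/-- The flat `n`-torus as a metric space (with the Euclidean distance of `ℝ^{2n}`). -/
abbrev Torus (n : ℕ) : Type _ := ↥(TorusSet n)

/-- `f` and `g` are homotopic maps. -/
def Homotopic {X Y : Type*} [TopologicalSpace X] [TopologicalSpace Y] (f g : X → Y) : Prop :=
  ∃ H : unitInterval × X → Y, Continuous H ∧ (∀ x, H (0, x) = f x) ∧ (∀ x, H (1, x) = g x)

/-- The energy `E_{s,n/s}(u) = ∫∫ |u(x)-u(y)|^{n/s}/|x-y|^{2n} dν dν` of a map `𝕋ⁿ → 𝕊¹`,
with `ν` the `n`-dimensional Hausdorff measure on `𝕋ⁿ`. -/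
def torusEnergy (n : ℕ) (s : ℝ) (u : Torus n → Circ) : ℝ≥0∞ :=
  ∫⁻ x, ∫⁻ y,
    ENNReal.ofReal
      (‖(u x : EuclideanSpace ℝ (Fin 2)) - (u y : EuclideanSpace ℝ (Fin 2))‖ ^ ((n : ℝ) / s)
        / dist x y ^ (2 * (n : ℝ)))
    ∂(μH[(n : ℝ)] : Measure (Torus n)) ∂(μH[(n : ℝ)] : Measure (Torus n))


set_option linter.unusedSectionVars false
set_option linter.unusedVariables false

namespace FracMin

/-- Weighted Jensen inequality for lower integrals. -/
theorem jensen {X : Type*} [MeasurableSpace X] (μ : Measure X) {p : ℝ} (hp : 1 < p)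
    {b g : X → ℝ≥0∞} (hb : Measurable b) (hg : Measurable g) :
    (∫⁻ x, b x * g x ∂μ) ^ p ≤ (∫⁻ x, b x ∂μ) ^ (p - 1) * ∫⁻ x, b x * g x ^ p ∂μ := by
  set q := p / (p - 1) with hq
  have hpq : p.HolderConjugate q := Real.HolderConjugate.conjExponent hp
  have hp0 : 0 < p := by linarith
  have h := ENNReal.lintegral_mul_le_Lp_mul_Lq (μ.withDensity b) hpq (f := g) (g := fun _ => 1)
    hg.aemeasurable aemeasurable_const
  rw [lintegral_withDensity_eq_lintegral_mul _ hb (by fun_prop),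
    lintegral_withDensity_eq_lintegral_mul _ hb (by fun_prop),
    lintegral_withDensity_eq_lintegral_mul _ hb (by fun_prop)] at h
  simp only [Pi.mul_apply, mul_one, ENNReal.one_rpow] at h
  calc (∫⁻ x, b x * g x ∂μ) ^ p
      ≤ ((∫⁻ x, b x * g x ^ p ∂μ) ^ (1 / p) * (∫⁻ x, b x ∂μ) ^ (1 / q)) ^ p := by gcongr
    _ = _ := by
        rw [ENNReal.mul_rpow_of_nonneg _ _ hp0.le, ← ENNReal.rpow_mul, ← ENNReal.rpow_mul, mul_comm]
        have h1 : 1 / p * p = 1 := by field_simp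
        have h2 : 1 / q * p = p - 1 := by
          rw [hq]; field_simp
        rw [h1, h2, ENNReal.rpow_one]

section basic

variable {X : Type*} [MetricSpace X] [MeasurableSpace X] [BorelSpace X]
variable {V : Type*} [NormedAddCommGroup V] [NormedSpace ℝ V]

/-- The singular kernel `|x-y|^{-2n}`. -/
def KK (n : ℕ) (x y : X) : ℝ≥0∞ := ((edist x y)⁻¹) ^ (2 * n)

/-- The integrand of the energy. -/
def ff (n : ℕ) (p : ℝ) (u : X → V) (x y : X) : ℝ≥0∞ := ‖u x - u y‖ₑ ^ p * KK n x y

/-- The part of the energy of pairs with first point in `Ω`. -/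
def EF (n : ℕ) (p : ℝ) (μ : Measure X) (u : X → V) (Ω : Set X) : ℝ≥0∞ :=
  ∫⁻ x in Ω, ∫⁻ y, ff n p u x y ∂μ ∂μ

/-- Ahlfors regularity. -/
structure Ahl (μ : Measure X) (n : ℕ) (c C : ℝ≥0∞) : Prop where
  c_ne : c ≠ 0
  c_top : c ≠ ⊤
  C_ne : C ≠ ⊤
  up : ∀ x r, 0 < r → μ (Metric.ball x r) ≤ C * ENNReal.ofReal r ^ n
  low : ∀ x r, 0 < r → r ≤ 1 → c * ENNReal.ofReal r ^ n ≤ μ (Metric.ball x r)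

theorem KK_symm (n : ℕ) (x y : X) : KK n x y = KK n y x := by simp [KK, edist_comm]

theorem ff_symm (n : ℕ) (p : ℝ) (u : X → V) (x y : X) : ff n p u x y = ff n p u y x := by
  simp only [ff, KK_symm n x y]
  rw [← enorm_neg (u x - u y), neg_sub]

theorem KK_le (n : ℕ) {x y z w : X} {C : ℝ} (hC : 0 < C) (h : dist z w ≤ C * dist x y) :
    KK n x y ≤ ENNReal.ofReal C ^ (2 * n) * KK n z w := by
  unfold KK
  rw [← mul_pow]
  gcongr
  have h' : edist z w ≤ ENNReal.ofReal C * edist x y := by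
    rw [edist_dist, edist_dist, ← ENNReal.ofReal_mul hC.le]
    exact ENNReal.ofReal_le_ofReal h
  have hC0 : ENNReal.ofReal C ≠ 0 := by simpa using hC
  have := ENNReal.inv_le_inv.2 h'
  rw [ENNReal.mul_inv (Or.inl hC0) (Or.inl ENNReal.ofReal_ne_top)] at this
  calc (edist x y)⁻¹ = ENNReal.ofReal C * ((ENNReal.ofReal C)⁻¹ * (edist x y)⁻¹) := by
        rw [← mul_assoc, ENNReal.mul_inv_cancel hC0 ENNReal.ofReal_ne_top, one_mul]
    _ ≤ _ := by gcongr

theorem inv_pow_le_KK (n : ℕ) {z w : X} {d C : ℝ} (hC : 0 < C) (hd : 0 < d) (h : dist z w ≤ C * d) :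
    ((ENNReal.ofReal d)⁻¹) ^ (2 * n) ≤ ENNReal.ofReal C ^ (2 * n) * KK n z w := by
  unfold KK
  rw [← mul_pow]
  gcongr
  have h' : edist z w ≤ ENNReal.ofReal C * ENNReal.ofReal d := by
    rw [edist_dist, ← ENNReal.ofReal_mul hC.le]
    exact ENNReal.ofReal_le_ofReal h
  have hC0 : ENNReal.ofReal C ≠ 0 := by simpa using hC
  have := ENNReal.inv_le_inv.2 h'
  rw [ENNReal.mul_inv (Or.inl hC0) (Or.inl ENNReal.ofReal_ne_top)] at this
  calc (ENNReal.ofReal d)⁻¹ = ENNReal.ofReal C * ((ENNReal.ofReal C)⁻¹ * (ENNReal.ofReal d)⁻¹) := by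
        rw [← mul_assoc, ENNReal.mul_inv_cancel hC0 ENNReal.ofReal_ne_top, one_mul]
    _ ≤ _ := by gcongr

theorem measurable_KK [SecondCountableTopology X] (n : ℕ) :
    Measurable (Function.uncurry (KK n : X → X → ℝ≥0∞)) := by
  unfold KK Function.uncurry
  fun_prop

theorem measurable_enorm_sub [SecondCountableTopology X] (p : ℝ) {u : X → V}
    (hu : Continuous u) : Measurable (Function.uncurry fun x y => ‖u x - u y‖ₑ ^ p) := by
  unfold Function.uncurry
  have : Continuous fun a : X × X => ‖u a.1 - u a.2‖ₑ := by fun_prop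
  exact this.measurable.pow_const p

theorem measurable_ff [SecondCountableTopology X] (n : ℕ) (p : ℝ) {u : X → V}
    (hu : Continuous u) : Measurable (Function.uncurry (ff n p u)) :=
  (measurable_enorm_sub p hu).mul (measurable_KK n)

/-- The integral of `|x-y|^{p-2n}` over a ball. -/
theorem near_int {μ : Measure X} {n : ℕ} {c C : ℝ≥0∞} (hA : Ahl μ n c C) {p : ℝ}
    (hp : (n : ℝ) < p) :
    ∃ C1 : ℝ≥0∞, C1 ≠ ⊤ ∧ ∀ (x : X) (r : ℝ), 0 < r →
      ∫⁻ y in Metric.ball x r, edist x y ^ p * KK n x y ∂μ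
        ≤ C1 * ENNReal.ofReal r ^ (p - n) := by
  have hp0 : 0 < p := lt_of_le_of_lt (Nat.cast_nonneg n) hp
  set θ : ℝ := (1 / 2) ^ (p - n) with hθ
  have hθ0 : 0 ≤ θ := by positivity
  have hθ1 : θ < 1 := Real.rpow_lt_one (by norm_num) (by norm_num) (by linarith)
  refine ⟨C * 4 ^ n * (1 - ENNReal.ofReal θ)⁻¹, ?_, ?_⟩
  · refine ENNReal.mul_ne_top (ENNReal.mul_ne_top hA.C_ne (by simp)) ?_
    simp only [ne_eq, ENNReal.inv_eq_top, tsub_eq_zero_iff_le, not_le]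
    simpa using hθ1
  intro x r hr
  set A : ℕ → Set X := fun i => Metric.ball x (r * (1 / 2) ^ i) \ Metric.ball x (r * (1 / 2) ^ (i + 1))
    with hAdef
  have hcov : Metric.ball x r ⊆ {x} ∪ ⋃ i, A i := by
    intro y hy
    by_cases hxy : y = x
    · left; exact hxy
    right
    have hd : 0 < dist y x := dist_pos.2 hxy
    have hlim : Filter.Tendsto (fun i : ℕ => r * (1 / 2 : ℝ) ^ i) Filter.atTop (nhds 0) := by
      have := (tendsto_pow_atTop_nhds_zero_of_lt_one (r := (1 / 2 : ℝ)) (by norm_num)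
        (by norm_num)).const_mul r
      simpa using this
    have hex : ∃ i : ℕ, r * (1 / 2 : ℝ) ^ i ≤ dist y x :=
      ((hlim.eventually (gt_mem_nhds hd)).exists).imp fun _ h => h.le
    classical
    have hspec := Nat.find_spec hex
    have hmin := fun k => Nat.find_min hex (m := k)
    set i := Nat.find hex
    have hi : i ≠ 0 := by
      intro h0
      rw [h0] at hspec
      simp at hspec
      have := Metric.mem_ball.1 hy
      linarith
    obtain ⟨k, hk⟩ := Nat.exists_eq_succ_of_ne_zero hi
    have := hmin k (by omega)
    refine Set.mem_iUnion.2 ⟨k, ?_, ?_⟩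
    · simpa using this
    · rw [hk] at hspec
      simpa using hspec
  have hxx : ∫⁻ y in {x}, edist x y ^ p * KK n x y ∂μ = 0 := by
    rw [lintegral_singleton]
    simp [hp0]
  have hterm : ∀ i, ∫⁻ y in A i, edist x y ^ p * KK n x y ∂μ
      ≤ C * 4 ^ n * ENNReal.ofReal r ^ (p - n) * ENNReal.ofReal θ ^ i := by
    intro i
    set ρ : ℝ := r * (1 / 2) ^ i with hρ
    have hρ0 : 0 < ρ := by positivity
    clear_value ρ
    have hb : ∀ y ∈ A i, edist x y ^ p * KK n x y
        ≤ ENNReal.ofReal ρ ^ p * (ENNReal.ofReal (ρ / 2))⁻¹ ^ (2 * n) := by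
      rintro y ⟨hy1, hy2⟩
      have h1 : edist x y ≤ ENNReal.ofReal ρ := by
        rw [edist_dist, dist_comm]; rw [hρ]; exact ENNReal.ofReal_le_ofReal (Metric.mem_ball.1 hy1).le
      have h2 : ENNReal.ofReal (ρ / 2) ≤ edist x y := by
        rw [edist_dist, dist_comm]
        apply ENNReal.ofReal_le_ofReal
        simp only [Metric.mem_ball, not_lt] at hy2
        calc ρ / 2 = r * (1 / 2) ^ (i + 1) := by rw [hρ]; ring
          _ ≤ _ := hy2
      unfold KK
      gcongr
    have hrho : ENNReal.ofReal ρ ≠ 0 := by simpa using hρ0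
    calc ∫⁻ y in A i, edist x y ^ p * KK n x y ∂μ
        ≤ ∫⁻ y in A i, ENNReal.ofReal ρ ^ p * (ENNReal.ofReal (ρ / 2))⁻¹ ^ (2 * n) ∂μ :=
          setLIntegral_mono' (Metric.isOpen_ball.measurableSet.diff Metric.isOpen_ball.measurableSet) hb
      _ = ENNReal.ofReal ρ ^ p * (ENNReal.ofReal (ρ / 2))⁻¹ ^ (2 * n) * μ (A i) := by
          rw [setLIntegral_const]
      _ ≤ ENNReal.ofReal ρ ^ p * (ENNReal.ofReal (ρ / 2))⁻¹ ^ (2 * n) * (C * ENNReal.ofReal ρ ^ n) := by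
          gcongr
          refine (measure_mono Set.sdiff_subset).trans ?_
          rw [← hρ]
          exact hA.up x ρ hρ0
      _ = C * ENNReal.ofReal (ρ ^ p * (ρ / 2)⁻¹ ^ (2 * n) * ρ ^ n) := by
          rw [ENNReal.ofReal_mul (by positivity), ENNReal.ofReal_mul (by positivity),
            ENNReal.ofReal_pow hρ0.le, ENNReal.ofReal_pow (by positivity),
            ENNReal.ofReal_inv_of_pos (by positivity), ENNReal.ofReal_rpow_of_pos hρ0]
          ring
      _ = C * ENNReal.ofReal (4 ^ n * r ^ (p - n) * θ ^ i) := by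
          congr 2
          have e1 : ρ ^ p = ρ ^ (p - n) * ρ ^ n := by
            rw [← Real.rpow_natCast ρ n, ← Real.rpow_add hρ0]; ring_nf
          have e2 : ρ ^ (p - n) = r ^ (p - n) * θ ^ i := by
            rw [hρ, Real.mul_rpow hr.le (by positivity), hθ, ← Real.rpow_natCast,
              ← Real.rpow_natCast, ← Real.rpow_mul (by norm_num), ← Real.rpow_mul (by norm_num),
              mul_comm (i : ℝ)]
          rw [e1, e2]
          have e3 : (ρ / 2)⁻¹ ^ (2 * n) = 4 ^ n * (ρ⁻¹) ^ n * (ρ⁻¹) ^ n := by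
            rw [inv_div, div_eq_mul_inv, mul_pow, pow_mul]; norm_num; ring
          rw [e3]
          have e4 : ρ ^ n * (ρ⁻¹) ^ n = 1 := by rw [← mul_pow, mul_inv_cancel₀ hρ0.ne', one_pow]
          linear_combination (4 ^ n * r ^ (p - n) * θ ^ i) * (ρ ^ n * (ρ⁻¹) ^ n + 1) * e4
      _ = _ := by
          rw [ENNReal.ofReal_mul (by positivity), ENNReal.ofReal_mul (by positivity),
            ENNReal.ofReal_pow hθ0, ENNReal.ofReal_rpow_of_pos hr,
            ENNReal.ofReal_pow (by norm_num)]
          simp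
          ring
  calc ∫⁻ y in Metric.ball x r, edist x y ^ p * KK n x y ∂μ
      ≤ ∫⁻ y in {x} ∪ ⋃ i, A i, edist x y ^ p * KK n x y ∂μ := lintegral_mono_set hcov
    _ ≤ ∫⁻ y in {x}, edist x y ^ p * KK n x y ∂μ
        + ∫⁻ y in ⋃ i, A i, edist x y ^ p * KK n x y ∂μ := lintegral_union_le _ _ _
    _ ≤ 0 + ∑' i, ∫⁻ y in A i, edist x y ^ p * KK n x y ∂μ := by
        rw [hxx]; gcongr; exact lintegral_iUnion_le _ _
    _ ≤ ∑' i, C * 4 ^ n * ENNReal.ofReal r ^ (p - n) * ENNReal.ofReal θ ^ i := by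
        rw [zero_add]; exact ENNReal.tsum_le_tsum hterm
    _ = _ := by rw [ENNReal.tsum_mul_left, ENNReal.tsum_geometric]; ring

end basic

end FracMin


namespace FracMin

section energy

variable {X : Type*} [MetricSpace X] [MeasurableSpace X] [BorelSpace X]
variable {V : Type*} [NormedAddCommGroup V] [NormedSpace ℝ V]

/-- The set of admissible pairs for the averaging kernels. -/
def SS (A : Set X) (δ : X → ℝ) (c0 : ℝ) : Set (X × X) :=
  {q | 0 < δ q.1 ∧ q.2 ∈ A ∧ dist q.1 q.2 ≤ c0 * δ q.1 ∧ δ q.1 ≤ c0 * δ q.2}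

/-- The dominating averaging kernel. -/
def bb (n : ℕ) (A : Set X) (δ : X → ℝ) (c0 : ℝ) (x z : X) : ℝ≥0∞ :=
  (SS A δ c0).indicator (fun q => ENNReal.ofReal c0 * (ENNReal.ofReal (δ q.1))⁻¹ ^ n) (x, z)

theorem measurable_bb [SecondCountableTopology X] (n : ℕ) {A : Set X} {δ : X → ℝ} (c0 : ℝ)
    (hA : MeasurableSet A) (hδ : Continuous δ) :
    Measurable (Function.uncurry (bb n A δ c0)) := by
  have hm := hδ.measurable
  show Measurable ((SS A δ c0).indicator
    (fun q : X × X => ENNReal.ofReal c0 * (ENNReal.ofReal (δ q.1))⁻¹ ^ n))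
  refine Measurable.indicator (by fun_prop) ?_
  have h1 : MeasurableSet {q : X × X | 0 < δ q.1} := measurableSet_lt (by fun_prop) (by fun_prop)
  have h2 : MeasurableSet {q : X × X | q.2 ∈ A} := measurable_snd hA
  have h3 : MeasurableSet {q : X × X | dist q.1 q.2 ≤ c0 * δ q.1} :=
    measurableSet_le (by fun_prop) (by fun_prop)
  have h4 : MeasurableSet {q : X × X | δ q.1 ≤ c0 * δ q.2} :=
    measurableSet_le (by fun_prop) (by fun_prop)
  exact h1.inter (h2.inter (h3.inter h4))

theorem bb_of_mem {n : ℕ} {A : Set X} {δ : X → ℝ} {c0 : ℝ} {x z : X} (h : (x, z) ∈ SS A δ c0) :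
    bb n A δ c0 x z = ENNReal.ofReal c0 * (ENNReal.ofReal (δ x))⁻¹ ^ n := by
  simp [bb, h]

theorem bb_of_notMem {n : ℕ} {A : Set X} {δ : X → ℝ} {c0 : ℝ} {x z : X} (h : (x, z) ∉ SS A δ c0) :
    bb n A δ c0 x z = 0 := by
  simp [bb, h]

theorem bb_int_left {μ : Measure X} {n : ℕ} {c C : ℝ≥0∞} (hA : Ahl μ n c C) {c0 : ℝ}
    (hc0 : 1 ≤ c0) {A : Set X} {δ : X → ℝ} (hδ : LipschitzWith 1 δ) (z : X) :
    ∫⁻ x, bb n A δ c0 x z ∂μ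
      ≤ ENNReal.ofReal c0 * C * ENNReal.ofReal ((1 + c0) * (2 * c0 ^ 2)) ^ n := by
  by_cases hz : 0 < δ z
  swap
  · have : ∀ x, bb n A δ c0 x z = 0 := fun x => by
      apply bb_of_notMem
      rintro ⟨h1, h2, h3, h4⟩
      simp only at h1 h4
      nlinarith
    simp [this]
  have hball := hA.up z (2 * c0 ^ 2 * δ z) (by positivity)
  set k := ENNReal.ofReal c0 * (ENNReal.ofReal (δ z / (1 + c0)))⁻¹ ^ n with hk
  calc ∫⁻ x, bb n A δ c0 x z ∂μ
      ≤ ∫⁻ x, (Metric.ball z (2 * c0 ^ 2 * δ z)).indicator (fun _ => k) x ∂μ := by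
        refine lintegral_mono fun x => ?_
        by_cases h : (x, z) ∈ SS A δ c0
        · rw [bb_of_mem h]
          obtain ⟨h1, h2, h3, h4⟩ := h
          simp only at h1 h2 h3 h4
          have hx : x ∈ Metric.ball z (2 * c0 ^ 2 * δ z) := by
            rw [Metric.mem_ball]
            have : c0 * δ x ≤ c0 * (c0 * δ z) := by gcongr
            nlinarith [mul_pos (pow_pos (by linarith : 0 < c0) 2) hz]
          rw [Set.indicator_of_mem hx, hk]
          gcongr
          rw [div_le_iff₀ (by linarith)]
          have := hδ.dist_le_mul z x
          rw [Real.dist_eq, dist_comm] at this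
          have := (abs_le.1 this).2
          simp at this
          linarith
        · rw [bb_of_notMem h]; exact zero_le
    _ = k * μ (Metric.ball z (2 * c0 ^ 2 * δ z)) := by
        rw [lintegral_indicator Metric.isOpen_ball.measurableSet, setLIntegral_const]
    _ ≤ k * (C * ENNReal.ofReal (2 * c0 ^ 2 * δ z) ^ n) := by gcongr
    _ = _ := by
        rw [hk]
        have : (ENNReal.ofReal (δ z / (1 + c0)))⁻¹ ^ n * ENNReal.ofReal (2 * c0 ^ 2 * δ z) ^ n
            = ENNReal.ofReal ((1 + c0) * (2 * c0 ^ 2)) ^ n := by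
          rw [← mul_pow, ← ENNReal.ofReal_inv_of_pos (by positivity),
            ← ENNReal.ofReal_mul (by positivity)]
          congr 2
          field_simp
        rw [← this]; ring

theorem bb_int {μ : Measure X} [SFinite μ] [SecondCountableTopology X]
    {n : ℕ} {A : Set X} {δ : X → ℝ} {c0 : ℝ} (hAm : MeasurableSet A) (hδ : Continuous δ)
    {B : ℝ≥0∞} (hB : ∀ z, ∫⁻ x, bb n A δ c0 x z ∂μ ≤ B) {G : X → ℝ≥0∞} (hG : Measurable G) :
    ∫⁻ x, ∫⁻ z, bb n A δ c0 x z * G z ∂μ ∂μ ≤ B * ∫⁻ z in A, G z ∂μ := by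
  have hb := measurable_bb n c0 hAm hδ
  rw [lintegral_lintegral_swap]
  swap
  · exact (hb.mul (hG.comp measurable_snd)).aemeasurable
  calc ∫⁻ z, ∫⁻ x, bb n A δ c0 x z * G z ∂μ ∂μ
      = ∫⁻ z, (∫⁻ x, bb n A δ c0 x z ∂μ) * G z ∂μ := by
        refine lintegral_congr fun z => ?_
        rw [lintegral_mul_const]
        exact hb.of_uncurry_right
    _ ≤ ∫⁻ z, A.indicator (fun z => B * G z) z ∂μ := by
        refine lintegral_mono fun z => ?_
        by_cases hz : z ∈ A
        · rw [Set.indicator_of_mem hz]; gcongr; exact hB z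
        · have : ∀ x, bb n A δ c0 x z = 0 := fun x => bb_of_notMem fun h => hz h.2.1
          simp [this]
    _ = _ := by
        rw [lintegral_indicator hAm, lintegral_const_mul _ hG]

/-- Basic energy estimate for averaged maps. -/
theorem energy_le {μ : Measure X} [SFinite μ] [SecondCountableTopology X]
    {n : ℕ} {c C : ℝ≥0∞} (hA : Ahl μ n c C) {p : ℝ} (hp : (n : ℝ) < p) {c0 : ℝ}
    (hc0 : 1 ≤ c0) {C3 : ℝ≥0∞} (hC3 : C3 ≠ ⊤) :
    ∃ C2 : ℝ≥0∞, C2 ≠ ⊤ ∧ ∀ (δ : X → ℝ) (A : Set X) (u w : X → V), LipschitzWith 1 δ →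
      MeasurableSet A → Continuous u → (∀ x, δ x ≤ 0 → w x = u x) →
      (∀ x a, 0 < δ x → ‖w x - a‖ₑ ^ p ≤ ∫⁻ z, bb n A δ c0 x z * ‖u z - a‖ₑ ^ p ∂μ) →
      (∀ x y, 0 < δ x → 2 * dist x y < δ x → ‖w x - w y‖ₑ ^ p ≤
        C3 * (edist x y ^ p * (ENNReal.ofReal (δ x))⁻¹ ^ p) *
          ∫⁻ z, bb n A δ c0 x z * ∫⁻ z', bb n A δ c0 x z' * ‖u z' - u z‖ₑ ^ p ∂μ ∂μ) →
      EF n p μ w {x | 0 < δ x} ≤ C2 * EF n p μ u A := by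
  obtain ⟨C1, hC1, hnear⟩ := near_int hA hp
  set B : ℝ≥0∞ := ENNReal.ofReal c0 * C * ENNReal.ofReal ((1 + c0) * (2 * c0 ^ 2)) ^ n with hBdef
  have hBtop : B ≠ ⊤ := by
    have := hA.C_ne
    finiteness
  set D : ℝ≥0∞ := ENNReal.ofReal (5 * c0 + 1) ^ (2 * n) with hD
  set C4 : ℝ≥0∞ := C3 * C1 * (ENNReal.ofReal c0 * ENNReal.ofReal (2 * c0) ^ (2 * n)) with hC4
  have hp0 : 0 < p := lt_of_le_of_lt (Nat.cast_nonneg n) hp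
  refine ⟨C4 * B + D * (B * B) + D * B, by finiteness, ?_⟩
  intro δ A u w hδ hAm hu hout P1 P3
  have hB : ∀ z, ∫⁻ x, bb n A δ c0 x z ∂μ ≤ B := fun z => bb_int_left hA hc0 hδ z
  have hb := measurable_bb n c0 hAm hδ.continuous
  have hf := measurable_ff n p hu
  have hlip : ∀ x y, δ x ≤ δ y + dist x y := fun x y => by
    have := hδ.dist_le_mul x y
    rw [Real.dist_eq] at this
    have := (abs_le.1 this).2
    simp at this
    linarith
  -- the three parts
  set g2 : X → X → ℝ≥0∞ := fun x y => ∫⁻ z, bb n A δ c0 x z * ∫⁻ z', bb n A δ c0 y z' * ff n p u z z' ∂μ ∂μ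
    with hg2
  set g3 : X → X → ℝ≥0∞ := fun x y => ∫⁻ z, bb n A δ c0 x z * ff n p u z y ∂μ with hg3
  have mg2i : Measurable fun q : X × X => ∫⁻ z', bb n A δ c0 q.1 z' * ff n p u q.2 z' ∂μ := by
    apply Measurable.lintegral_prod_right'
      (f := fun r : (X × X) × X => bb n A δ c0 r.1.1 r.2 * ff n p u r.1.2 r.2)
    exact (hb.comp (by fun_prop : Measurable fun r : (X × X) × X => (r.1.1, r.2))).mul
      (hf.comp (by fun_prop : Measurable fun r : (X × X) × X => (r.1.2, r.2)))
  have mg2 : Measurable (Function.uncurry g2) := by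
    apply Measurable.lintegral_prod_right'
      (f := fun r : (X × X) × X => bb n A δ c0 r.1.1 r.2 *
        ∫⁻ z', bb n A δ c0 r.1.2 z' * ff n p u r.2 z' ∂μ)
    exact (hb.comp (by fun_prop : Measurable fun r : (X × X) × X => (r.1.1, r.2))).mul
      (mg2i.comp (by fun_prop : Measurable fun r : (X × X) × X => (r.1.2, r.2)))
  have mg3 : Measurable (Function.uncurry g3) := by
    apply Measurable.lintegral_prod_right'
      (f := fun r : (X × X) × X => bb n A δ c0 r.1.1 r.2 * ff n p u r.2 r.1.2)
    exact (hb.comp (by fun_prop : Measurable fun r : (X × X) × X => (r.1.1, r.2))).mul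
      (hf.comp (by fun_prop : Measurable fun r : (X × X) × X => (r.2, r.1.2)))
  set G : X → ℝ≥0∞ := fun z => ∫⁻ y, ff n p u z y ∂μ with hG
  have mG : Measurable G := Measurable.lintegral_prod_right' hf
  set Q : X → ℝ≥0∞ := fun x =>
    ∫⁻ z, bb n A δ c0 x z * ∫⁻ z', bb n A δ c0 x z' * ‖u z' - u z‖ₑ ^ p ∂μ ∂μ with hQ
  set T1 : X → X → ℝ≥0∞ := fun x y => (Metric.ball x (δ x)).indicator
    (fun y => C3 * (ENNReal.ofReal (δ x))⁻¹ ^ p * Q x * (edist x y ^ p * KK n x y)) y with hT1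
  have hpt : ∀ x, 0 < δ x → ∀ y, ff n p w x y ≤ T1 x y + (D * g2 x y + D * g3 x y) := by
    intro x hx y
    by_cases hxy : 2 * dist x y < δ x
    · refine le_trans ?_ le_self_add
      have hy : y ∈ Metric.ball x (δ x) := by
        rw [Metric.mem_ball, dist_comm]; linarith [dist_nonneg (x := x) (y := y)]
      simp only [hT1, Set.indicator_of_mem hy]
      calc ff n p w x y = ‖w x - w y‖ₑ ^ p * KK n x y := rfl
        _ ≤ (C3 * (edist x y ^ p * (ENNReal.ofReal (δ x))⁻¹ ^ p) * Q x) * KK n x y := by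
            gcongr; exact P3 x y hx hxy
        _ = _ := by ring
    push Not at hxy
    refine le_trans ?_ le_add_self
    by_cases hy : 0 < δ y
    · refine le_trans ?_ le_self_add
      have hdy : δ y ≤ 3 * dist x y := by
        have := hlip y x; rw [dist_comm] at this; linarith
      calc ff n p w x y = ‖w x - w y‖ₑ ^ p * KK n x y := rfl
        _ ≤ (∫⁻ z, bb n A δ c0 x z * ∫⁻ z', bb n A δ c0 y z' * ‖u z - u z'‖ₑ ^ p ∂μ ∂μ) * KK n x y := by
            gcongr
            refine (P1 x (w y) hx).trans ?_
            refine lintegral_mono fun z => ?_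
            simp only
            gcongr
            have := P1 y (u z) hy
            rw [← enorm_neg, neg_sub] at this
            refine this.trans (le_of_eq ?_)
            refine lintegral_congr fun z' => ?_
            rw [← enorm_neg (u z' - u z), neg_sub]
        _ = ∫⁻ z, bb n A δ c0 x z * ∫⁻ z', bb n A δ c0 y z' * (‖u z - u z'‖ₑ ^ p * KK n x y) ∂μ ∂μ := by
            have m1 : Measurable fun z => ∫⁻ z', bb n A δ c0 y z' * ‖u z - u z'‖ₑ ^ p ∂μ := by
              apply Measurable.lintegral_prod_right'
                (f := fun r : X × X => bb n A δ c0 y r.2 * ‖u r.1 - u r.2‖ₑ ^ p)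
              exact (hb.of_uncurry_left.comp measurable_snd).mul (measurable_enorm_sub p hu)
            have mm : Measurable fun z => bb n A δ c0 x z *
                ∫⁻ z', bb n A δ c0 y z' * ‖u z - u z'‖ₑ ^ p ∂μ := hb.of_uncurry_left.mul m1
            rw [← lintegral_mul_const _ mm]
            refine lintegral_congr fun z => ?_
            rw [mul_assoc, ← lintegral_mul_const]
            · simp only [mul_assoc]
            · exact hb.of_uncurry_left.mul (measurable_enorm_sub p hu).of_uncurry_left
        _ ≤ ∫⁻ z, D * (bb n A δ c0 x z * ∫⁻ z', bb n A δ c0 y z' * ff n p u z z' ∂μ) ∂μ := by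
            refine lintegral_mono fun z => ?_
            by_cases hz : (x, z) ∈ SS A δ c0
            swap
            · simp [bb_of_notMem hz]
            rw [mul_left_comm D]
            simp only
            refine mul_le_mul' le_rfl ?_
            rw [← lintegral_const_mul]
            swap
            · exact hb.of_uncurry_left.mul hf.of_uncurry_left
            refine lintegral_mono fun z' => ?_
            by_cases hz' : (y, z') ∈ SS A δ c0
            swap
            · simp [bb_of_notMem hz']
            rw [mul_left_comm D]
            simp only
            refine mul_le_mul' le_rfl ?_
            unfold ff
            rw [mul_left_comm D]
            refine mul_le_mul' le_rfl ?_
            apply KK_le n (by linarith)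
            have h3 := hz.2.2.1
            have h3' := hz'.2.2.1
            simp only at h3 h3'
            have := dist_triangle4 z x y z'
            rw [dist_comm z x] at this
            nlinarith
        _ = D * g2 x y := by
            rw [lintegral_const_mul]
            exact hb.of_uncurry_left.mul
              (mg2i.comp (by fun_prop : Measurable fun z : X => (y, z)))
    · push Not at hy
      refine le_trans ?_ le_add_self
      have hdy : δ x ≤ dist x y := by have := hlip x y; linarith
      calc ff n p w x y = ‖w x - u y‖ₑ ^ p * KK n x y := by rw [← hout y hy]; rfl
        _ ≤ (∫⁻ z, bb n A δ c0 x z * ‖u z - u y‖ₑ ^ p ∂μ) * KK n x y := by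
            gcongr
            exact P1 x (u y) hx
        _ = ∫⁻ z, bb n A δ c0 x z * (‖u z - u y‖ₑ ^ p * KK n x y) ∂μ := by
            rw [← lintegral_mul_const]
            · simp only [mul_assoc]
            · exact hb.of_uncurry_left.mul (measurable_enorm_sub p hu).of_uncurry_right
        _ ≤ ∫⁻ z, D * (bb n A δ c0 x z * ff n p u z y) ∂μ := by
            refine lintegral_mono fun z => ?_
            by_cases hz : (x, z) ∈ SS A δ c0
            swap
            · simp [bb_of_notMem hz]
            rw [mul_left_comm D]
            simp only
            refine mul_le_mul' le_rfl ?_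
            unfold ff
            rw [mul_left_comm D]
            refine mul_le_mul' le_rfl ?_
            apply KK_le n (by linarith)
            have h3 := hz.2.2.1
            simp only at h3
            have := dist_triangle z x y
            rw [dist_comm z x] at this
            nlinarith
        _ = D * g3 x y := by
            rw [lintegral_const_mul]
            exact hb.of_uncurry_left.mul hf.of_uncurry_right
  have hI1 : ∀ x, 0 < δ x → ∫⁻ y, T1 x y ∂μ ≤ C4 * ∫⁻ z, bb n A δ c0 x z * G z ∂μ := by
    intro x hx
    have hx0 : ENNReal.ofReal (δ x) ≠ 0 := by simpa using hx
    simp only [hT1]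
    rw [lintegral_indicator Metric.isOpen_ball.measurableSet, lintegral_const_mul]
    swap
    · exact Measurable.mul (by fun_prop) (measurable_KK n).of_uncurry_left
    calc C3 * (ENNReal.ofReal (δ x))⁻¹ ^ p * Q x * ∫⁻ y in Metric.ball x (δ x), edist x y ^ p * KK n x y ∂μ
        ≤ C3 * (ENNReal.ofReal (δ x))⁻¹ ^ p * Q x * (C1 * ENNReal.ofReal (δ x) ^ (p - n)) := by
          gcongr; exact hnear x _ hx
      _ = C3 * C1 * ((ENNReal.ofReal (δ x))⁻¹ ^ n * Q x) := by
          have : (ENNReal.ofReal (δ x))⁻¹ ^ p * ENNReal.ofReal (δ x) ^ (p - n)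
              = (ENNReal.ofReal (δ x))⁻¹ ^ n := by
            rw [ENNReal.rpow_sub _ _ hx0 ENNReal.ofReal_ne_top, ENNReal.inv_rpow, ENNReal.rpow_natCast,
              div_eq_mul_inv, ← mul_assoc, ENNReal.inv_mul_cancel, one_mul, ENNReal.inv_pow]
            · simp [ENNReal.rpow_eq_zero_iff, hx0, hp0.not_gt]
            · exact ENNReal.rpow_ne_top_of_nonneg hp0.le ENNReal.ofReal_ne_top
          rw [← this]; ring
      _ ≤ C3 * C1 * ((ENNReal.ofReal c0 * ENNReal.ofReal (2 * c0) ^ (2 * n)) *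
            ∫⁻ z, bb n A δ c0 x z * G z ∂μ) := by
          refine mul_le_mul' le_rfl ?_
          have m1 : Measurable fun z => ∫⁻ z', bb n A δ c0 x z' * ‖u z' - u z‖ₑ ^ p ∂μ := by
            apply Measurable.lintegral_prod_right'
              (f := fun r : X × X => bb n A δ c0 x r.2 * ‖u r.2 - u r.1‖ₑ ^ p)
            exact (hb.of_uncurry_left.comp measurable_snd).mul
              ((measurable_enorm_sub p hu).comp measurable_swap)
          have mm : Measurable fun z => bb n A δ c0 x z *
              ∫⁻ z', bb n A δ c0 x z' * ‖u z' - u z‖ₑ ^ p ∂μ := hb.of_uncurry_left.mul m1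
          have mm2 : Measurable fun z => bb n A δ c0 x z * G z := hb.of_uncurry_left.mul mG
          simp only [hQ]
          rw [← lintegral_const_mul _ mm,
            ← lintegral_const_mul _ mm2]
          refine lintegral_mono fun z => ?_
          by_cases hz : (x, z) ∈ SS A δ c0
          swap
          · simp [bb_of_notMem hz]
          rw [mul_left_comm, mul_left_comm _ (bb n A δ c0 x z)]
          simp only
          refine mul_le_mul' le_rfl ?_
          rw [hG, ← lintegral_const_mul, ← lintegral_const_mul]
          rotate_left
          · exact hf.of_uncurry_left
          · exact hb.of_uncurry_left.mul (measurable_enorm_sub p hu).of_uncurry_right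
          refine lintegral_mono fun z' => ?_
          by_cases hz' : (x, z') ∈ SS A δ c0
          swap
          · simp [bb_of_notMem hz']
          rw [bb_of_mem hz']
          unfold ff
          rw [← enorm_neg (u z' - u z), neg_sub]
          have key : ((ENNReal.ofReal (δ x))⁻¹) ^ (2 * n)
              ≤ ENNReal.ofReal (2 * c0) ^ (2 * n) * KK n z z' := by
            apply inv_pow_le_KK n (by linarith) hx
            have h3 := hz.2.2.1
            have h3' := hz'.2.2.1
            simp only at h3 h3'
            have := dist_triangle z x z'
            rw [dist_comm z x] at this
            linarith
          calc (ENNReal.ofReal (δ x))⁻¹ ^ n *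
                (ENNReal.ofReal c0 * (ENNReal.ofReal (δ x))⁻¹ ^ n * ‖u z - u z'‖ₑ ^ p)
              = ENNReal.ofReal c0 * ‖u z - u z'‖ₑ ^ p * (ENNReal.ofReal (δ x))⁻¹ ^ (2 * n) := by
                rw [two_mul, pow_add]; ring
            _ ≤ ENNReal.ofReal c0 * ‖u z - u z'‖ₑ ^ p * (ENNReal.ofReal (2 * c0) ^ (2 * n) * KK n z z') := by
                gcongr
            _ = _ := by ring
      _ = _ := by rw [hC4]; ring
  have hI2 : ∫⁻ x, ∫⁻ y, g2 x y ∂μ ∂μ ≤ B * (B * ∫⁻ z in A, G z ∂μ) := by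
    have m2 : Measurable fun z => ∫⁻ y, ∫⁻ z', bb n A δ c0 y z' * ff n p u z z' ∂μ ∂μ := by
      apply Measurable.lintegral_prod_right'
        (f := fun r : X × X => ∫⁻ z', bb n A δ c0 r.2 z' * ff n p u r.1 z' ∂μ)
      exact mg2i.comp measurable_swap
    calc ∫⁻ x, ∫⁻ y, g2 x y ∂μ ∂μ
        = ∫⁻ x, ∫⁻ z, bb n A δ c0 x z * ∫⁻ y, ∫⁻ z', bb n A δ c0 y z' * ff n p u z z' ∂μ ∂μ ∂μ ∂μ := by
          refine lintegral_congr fun x => ?_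
          simp only [hg2]
          rw [lintegral_lintegral_swap]
          · refine lintegral_congr fun z => ?_
            rw [lintegral_const_mul]
            exact mg2i.comp (by fun_prop : Measurable fun y : X => (y, z))
          · exact ((hb.of_uncurry_left.comp measurable_snd).mul mg2i).aemeasurable
      _ ≤ B * ∫⁻ z in A, ∫⁻ y, ∫⁻ z', bb n A δ c0 y z' * ff n p u z z' ∂μ ∂μ ∂μ :=
          bb_int hAm hδ.continuous hB m2
      _ ≤ B * ∫⁻ z in A, B * G z ∂μ := by
          gcongr with z
          refine (bb_int hAm hδ.continuous hB hf.of_uncurry_left).trans ?_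
          gcongr
          exact setLIntegral_le_lintegral _ _
      _ = _ := by rw [lintegral_const_mul _ mG]
  have hI3 : ∫⁻ x, ∫⁻ y, g3 x y ∂μ ∂μ ≤ B * ∫⁻ z in A, G z ∂μ := by
    calc ∫⁻ x, ∫⁻ y, g3 x y ∂μ ∂μ = ∫⁻ x, ∫⁻ z, bb n A δ c0 x z * G z ∂μ ∂μ := by
          refine lintegral_congr fun x => ?_
          simp only [hg3]
          rw [lintegral_lintegral_swap]
          · refine lintegral_congr fun z => ?_
            rw [lintegral_const_mul]
            exact hf.of_uncurry_left
          · exact ((hb.of_uncurry_left.comp measurable_snd).mul (hf.comp measurable_swap)).aemeasurable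
      _ ≤ _ := bb_int hAm hδ.continuous hB mG
  have mi2 : Measurable fun x => ∫⁻ y, g2 x y ∂μ := Measurable.lintegral_prod_right' mg2
  have mi3 : Measurable fun x => ∫⁻ y, g3 x y ∂μ := Measurable.lintegral_prod_right' mg3
  have hΩ : MeasurableSet {x | 0 < δ x} := measurableSet_lt measurable_const hδ.continuous.measurable
  calc EF n p μ w {x | 0 < δ x}
      ≤ ∫⁻ x in {x | 0 < δ x}, (C4 * (∫⁻ z, bb n A δ c0 x z * G z ∂μ) +
          (D * (∫⁻ y, g2 x y ∂μ) + D * ∫⁻ y, g3 x y ∂μ)) ∂μ := by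
        refine setLIntegral_mono' hΩ fun x hx => ?_
        calc ∫⁻ y, ff n p w x y ∂μ ≤ ∫⁻ y, (T1 x y + (D * g2 x y + D * g3 x y)) ∂μ :=
              lintegral_mono (hpt x hx)
          _ = ∫⁻ y, T1 x y ∂μ + (D * (∫⁻ y, g2 x y ∂μ) + D * ∫⁻ y, g3 x y ∂μ) := by
              have a2 := mg2.of_uncurry_left (x := x)
              have a3 := mg3.of_uncurry_left (x := x)
              have a23 : Measurable fun y => D * g2 x y + D * g3 x y :=
                (a2.const_mul _).add (a3.const_mul _)
              have a33 : Measurable fun y => D * g3 x y := a3.const_mul _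
              rw [lintegral_add_right _ a23,
                lintegral_add_right _ a33, lintegral_const_mul _ a2,
                lintegral_const_mul _ a3]
          _ ≤ _ := by gcongr; exact hI1 x hx
    _ ≤ ∫⁻ x, (C4 * (∫⁻ z, bb n A δ c0 x z * G z ∂μ) +
          (D * (∫⁻ y, g2 x y ∂μ) + D * ∫⁻ y, g3 x y ∂μ)) ∂μ := setLIntegral_le_lintegral _ _
    _ = C4 * (∫⁻ x, ∫⁻ z, bb n A δ c0 x z * G z ∂μ ∂μ) +
          (D * (∫⁻ x, ∫⁻ y, g2 x y ∂μ ∂μ) + D * ∫⁻ x, ∫⁻ y, g3 x y ∂μ ∂μ) := by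
        have a23 : Measurable fun x => D * (∫⁻ y, g2 x y ∂μ) + D * ∫⁻ y, g3 x y ∂μ :=
                (mi2.const_mul _).add (mi3.const_mul _)
        have a33 : Measurable fun x => D * ∫⁻ y, g3 x y ∂μ := mi3.const_mul _
        rw [lintegral_add_right _ a23,
                lintegral_add_right _ a33, lintegral_const_mul _ mi2,
                lintegral_const_mul _ mi3, lintegral_const_mul]
        apply Measurable.lintegral_prod_right' (f := fun r : X × X => bb n A δ c0 r.1 r.2 * G r.2)
        exact hb.mul (mG.comp measurable_snd)
    _ ≤ C4 * (B * ∫⁻ z in A, G z ∂μ) + (D * (B * (B * ∫⁻ z in A, G z ∂μ)) + D * (B * ∫⁻ z in A, G z ∂μ)) := by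
        gcongr
        exact bb_int hAm hδ.continuous hB mG
    _ = _ := by unfold EF; ring

end energy

end FracMin


namespace FracMin

section avg

variable {X : Type*} [MetricSpace X] [MeasurableSpace X] [BorelSpace X] [SecondCountableTopology X]
variable {V : Type*} [NormedAddCommGroup V] [NormedSpace ℝ V] [CompleteSpace V]

/-- Probability weights. -/
structure Wt (μ : Measure X) (k : X → ℝ) : Prop where
  meas : Measurable k
  nonneg : ∀ z, 0 ≤ k z
  int : Integrable k μ
  one : ∫ z, k z ∂μ = 1

/-- Weighted average. -/
def avg (μ : Measure X) (k : X → ℝ) (u : X → V) : V := ∫ z, k z • u z ∂μ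

variable {μ : Measure X}

theorem Wt.integrable_smul {k : X → ℝ} (hk : Wt μ k) {u : X → V} (hu : Continuous u)
    (hb : ∀ z, ‖u z‖ ≤ 1) : Integrable (fun z => k z • u z) μ := by
  refine hk.int.mono (hk.meas.aestronglyMeasurable.smul hu.aestronglyMeasurable) ?_
  refine Filter.Eventually.of_forall fun z => ?_
  rw [norm_smul]
  exact mul_le_of_le_one_right (norm_nonneg _) (hb z)

theorem avg_sub {k : X → ℝ} (hk : Wt μ k) {u : X → V} (hu : Continuous u)
    (hb : ∀ z, ‖u z‖ ≤ 1) (a : V) : avg μ k u - a = ∫ z, k z • (u z - a) ∂μ := by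
  simp only [smul_sub]
  rw [integral_sub (hk.integrable_smul hu hb) (hk.int.smul_const a), integral_smul_const, hk.one,
    one_smul]
  rfl

theorem Wt.lint {k : X → ℝ} (hk : Wt μ k) : ∫⁻ z, ENNReal.ofReal (k z) ∂μ = 1 := by
  rw [← ofReal_integral_eq_lintegral_ofReal hk.int (Filter.Eventually.of_forall hk.nonneg), hk.one]
  simp

theorem avg_le {p : ℝ} (hp : 1 < p) {k : X → ℝ} (hk : Wt μ k) {u : X → V} (hu : Continuous u)
    (hb : ∀ z, ‖u z‖ ≤ 1) (a : V) {b : X → ℝ≥0∞} (hkb : ∀ z, ENNReal.ofReal (k z) ≤ b z) :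
    ‖avg μ k u - a‖ₑ ^ p ≤ ∫⁻ z, b z * ‖u z - a‖ₑ ^ p ∂μ := by
  have hm : Measurable fun z => ENNReal.ofReal (k z) := hk.meas.ennreal_ofReal
  have hg : Measurable fun z => ‖u z - a‖ₑ := by
    have : Continuous fun z => ‖u z - a‖ₑ := by fun_prop
    exact this.measurable
  calc ‖avg μ k u - a‖ₑ ^ p ≤ (∫⁻ z, ENNReal.ofReal (k z) * ‖u z - a‖ₑ ∂μ) ^ p := by
        rw [avg_sub hk hu hb]
        gcongr
        refine (enorm_integral_le_lintegral_enorm _).trans (le_of_eq ?_)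
        refine lintegral_congr fun z => ?_
        rw [enorm_smul, Real.enorm_eq_ofReal (hk.nonneg z)]
    _ ≤ _ := jensen μ hp hm hg
    _ = ∫⁻ z, ENNReal.ofReal (k z) * ‖u z - a‖ₑ ^ p ∂μ := by
        rw [hk.lint, ENNReal.one_rpow, one_mul]
    _ ≤ _ := by
        gcongr with z
        exact hkb z

theorem avg_diff {p : ℝ} (hp : 1 < p) {k k' : X → ℝ} (hk : Wt μ k) (hk' : Wt μ k') {u : X → V}
    (hu : Continuous u) (hb : ∀ z, ‖u z‖ ≤ 1) {L : ℝ≥0∞} {b : X → ℝ≥0∞} (mb : Measurable b)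
    (hkb : ∀ z, ‖k z - k' z‖ₑ ≤ L * b z) :
    ‖avg μ k u - avg μ k' u‖ₑ ^ p ≤
      L ^ p * ((∫⁻ z, b z ∂μ) ^ (p - 1) * ∫⁻ z, b z * ‖u z - avg μ k u‖ₑ ^ p ∂μ) := by
  have hg : Measurable fun z => ‖u z - avg μ k u‖ₑ := by
    have : Continuous fun z => ‖u z - avg μ k u‖ₑ := by fun_prop
    exact this.measurable
  have hp0 : 0 ≤ p := by linarith
  set a := avg μ k u with ha
  have e1 : a - avg μ k' u = ∫ z, (k z - k' z) • (u z - a) ∂μ := by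
    have h1 := avg_sub hk hu hb a
    have h2 := avg_sub hk' hu hb a
    simp only [sub_smul]
    rw [integral_sub, ← h1, ← h2, ← ha]
    · abel
    · simp only [smul_sub]
      exact (hk.integrable_smul hu hb).sub (hk.int.smul_const a)
    · simp only [smul_sub]
      exact (hk'.integrable_smul hu hb).sub (hk'.int.smul_const a)
  calc ‖a - avg μ k' u‖ₑ ^ p ≤ (∫⁻ z, L * (b z * ‖u z - a‖ₑ) ∂μ) ^ p := by
        rw [e1]
        gcongr
        refine (enorm_integral_le_lintegral_enorm _).trans ?_
        refine lintegral_mono fun z => ?_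
        simp only
        rw [enorm_smul, ← mul_assoc]
        gcongr
        exact hkb z
    _ = L ^ p * (∫⁻ z, b z * ‖u z - a‖ₑ ∂μ) ^ p := by
        have m2 : Measurable fun z => b z * ‖u z - a‖ₑ := mb.mul hg
        rw [lintegral_const_mul _ m2, ENNReal.mul_rpow_of_nonneg _ _ hp0]
    _ ≤ _ := by
        gcongr
        exact jensen μ hp mb hg

theorem avg_norm {p : ℝ} (hp : 1 < p) {k : X → ℝ} (hk : Wt μ k) {u : X → V} (hu : Continuous u)
    (hb : ∀ z, ‖u z‖ = 1) {b : X → ℝ≥0∞} (hkb : ∀ z, ENNReal.ofReal (k z) ≤ b z) :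
    ‖1 - ‖avg μ k u‖‖ₑ ^ p ≤ ∫⁻ z, b z * ∫⁻ z', b z' * ‖u z' - u z‖ₑ ^ p ∂μ ∂μ := by
  have hm : Measurable fun z => ENNReal.ofReal (k z) := hk.meas.ennreal_ofReal
  calc ‖1 - ‖avg μ k u‖‖ₑ ^ p = (∫⁻ z, ENNReal.ofReal (k z) ∂μ) * ‖1 - ‖avg μ k u‖‖ₑ ^ p := by
        rw [hk.lint, one_mul]
    _ = ∫⁻ z, ENNReal.ofReal (k z) * ‖1 - ‖avg μ k u‖‖ₑ ^ p ∂μ := by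
        rw [lintegral_mul_const _ hm]
    _ ≤ _ := by
        refine lintegral_mono fun z => ?_
        refine mul_le_mul' (hkb z) ?_
        refine le_trans ?_ (avg_le hp hk hu (fun z => (hb z).le) (u z) hkb)
        have : 0 ≤ p := by linarith
        gcongr
        rw [← ofReal_norm, ← ofReal_norm]
        refine ENNReal.ofReal_le_ofReal ?_
        rw [Real.norm_eq_abs, abs_sub_comm, ← hb z]
        exact abs_norm_sub_norm_le _ _

theorem bb_dbl [SFinite μ] {n : ℕ} {p : ℝ} {c0 : ℝ} (hc0 : 1 ≤ c0) {A : Set X} (hA : MeasurableSet A)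
    {δ : X → ℝ} (hδ : Continuous δ) {u : X → V} (hu : Continuous u) {x : X}
    {S : Set X} (hS : MeasurableSet S) (hxS : ∀ z, (x, z) ∈ SS A δ c0 → z ∈ S) :
    ∫⁻ z, bb n A δ c0 x z * ∫⁻ z', bb n A δ c0 x z' * ‖u z' - u z‖ₑ ^ p ∂μ ∂μ ≤
      (ENNReal.ofReal c0 ^ 2 * ENNReal.ofReal (2 * c0) ^ (2 * n)) * EF n p μ u S := by
  have hf := measurable_ff n p hu
  have hbm := measurable_bb n c0 hA hδ
  set G : X → ℝ≥0∞ := fun z => ∫⁻ y, ff n p u z y ∂μ with hG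
  set K := (ENNReal.ofReal c0 ^ 2 * ENNReal.ofReal (2 * c0) ^ (2 * n)) with hK
  calc _ ≤ ∫⁻ z, S.indicator (fun z => K * G z) z ∂μ := by
        refine lintegral_mono fun z => ?_
        by_cases hz : (x, z) ∈ SS A δ c0
        swap
        · simp [bb_of_notMem hz]
        rw [Set.indicator_of_mem (hxS z hz)]
        simp only [hG]
        have m1 : Measurable fun z' => bb n A δ c0 x z' * ‖u z' - u z‖ₑ ^ p :=
          hbm.of_uncurry_left.mul (measurable_enorm_sub p hu).of_uncurry_right
        rw [← lintegral_const_mul _ hf.of_uncurry_left, ← lintegral_const_mul _ m1]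
        refine lintegral_mono fun z' => ?_
        by_cases hz' : (x, z') ∈ SS A δ c0
        swap
        · simp [bb_of_notMem hz']
        simp only
        rw [bb_of_mem hz', bb_of_mem hz]
        unfold ff
        rw [← enorm_neg (u z' - u z), neg_sub]
        have hx := hz.1
        have key : ((ENNReal.ofReal (δ x))⁻¹) ^ (2 * n)
            ≤ ENNReal.ofReal (2 * c0) ^ (2 * n) * KK n z z' := by
          apply inv_pow_le_KK n (by linarith) hx
          have h3 := hz.2.2.1
          have h3' := hz'.2.2.1
          simp only at h3 h3'
          have := dist_triangle z x z'
          rw [dist_comm z x] at this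
          linarith
        calc _ = ENNReal.ofReal c0 ^ 2 * ‖u z - u z'‖ₑ ^ p * (ENNReal.ofReal (δ x))⁻¹ ^ (2 * n) := by
              rw [two_mul, pow_add]; ring
          _ ≤ ENNReal.ofReal c0 ^ 2 * ‖u z - u z'‖ₑ ^ p * (ENNReal.ofReal (2 * c0) ^ (2 * n) * KK n z z') := by
              gcongr
          _ = _ := by ring
    _ = _ := by
        have mG : Measurable G := Measurable.lintegral_prod_right' hf
        rw [lintegral_indicator hS, lintegral_const_mul _ mG]
        rfl

theorem bb_int_right {n : ℕ} {c C : ℝ≥0∞} (hA : Ahl μ n c C) {c0 : ℝ}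
    (hc0 : 1 ≤ c0) {A : Set X} {δ : X → ℝ} (x : X) :
    ∫⁻ z, bb n A δ c0 x z ∂μ ≤ ENNReal.ofReal c0 * C * ENNReal.ofReal (2 * c0) ^ n := by
  by_cases hx : 0 < δ x
  swap
  · have : ∀ z, bb n A δ c0 x z = 0 := fun z => bb_of_notMem fun h => hx h.1
    simp [this]
  have hball := hA.up x (2 * c0 * δ x) (by positivity)
  set k := ENNReal.ofReal c0 * (ENNReal.ofReal (δ x))⁻¹ ^ n with hk
  calc ∫⁻ z, bb n A δ c0 x z ∂μ
      ≤ ∫⁻ z, (Metric.ball x (2 * c0 * δ x)).indicator (fun _ => k) z ∂μ := by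
        refine lintegral_mono fun z => ?_
        by_cases h : (x, z) ∈ SS A δ c0
        · rw [bb_of_mem h]
          obtain ⟨h1, h2, h3, h4⟩ := h
          simp only at h1 h2 h3 h4
          have hz : z ∈ Metric.ball x (2 * c0 * δ x) := by
            rw [Metric.mem_ball, dist_comm]
            nlinarith
          rw [Set.indicator_of_mem hz, hk]
        · rw [bb_of_notMem h]; exact zero_le
    _ = k * μ (Metric.ball x (2 * c0 * δ x)) := by
        rw [lintegral_indicator Metric.isOpen_ball.measurableSet, setLIntegral_const]
    _ ≤ k * (C * ENNReal.ofReal (2 * c0 * δ x) ^ n) := by gcongr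
    _ = _ := by
        rw [hk]
        have : (ENNReal.ofReal (δ x))⁻¹ ^ n * ENNReal.ofReal (2 * c0 * δ x) ^ n
            = ENNReal.ofReal (2 * c0) ^ n := by
          rw [← mul_pow, ← ENNReal.ofReal_inv_of_pos (by positivity),
            ← ENNReal.ofReal_mul (by positivity)]
          congr 2
          field_simp
        rw [← this]; ring

end avg

end FracMin


namespace FracMin

section comp

variable {X : Type*} [MetricSpace X] [MeasurableSpace X] [BorelSpace X] [SecondCountableTopology X]
variable {V : Type*} [NormedAddCommGroup V] [NormedSpace ℝ V] [CompleteSpace V]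
variable {μ : Measure X}

theorem comp_of_kernel [SFinite μ] {n : ℕ} {c C : ℝ≥0∞} (hA : Ahl μ n c C) {p : ℝ}
    (hp : (n : ℝ) < p) (hp1 : 1 < p) {c0 : ℝ} (hc0 : 1 ≤ c0) {C5 : ℝ≥0∞} (hC5 : C5 ≠ ⊤) :
    ∃ C2 : ℝ≥0∞, C2 ≠ ⊤ ∧ ∀ (δ : X → ℝ) (A : Set X) (u : X → V) (k : X → X → ℝ),
      LipschitzWith 1 δ → MeasurableSet A → Continuous u → (∀ z, ‖u z‖ = 1) →
      (∀ x, 0 < δ x → Wt μ (k x)) →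
      (∀ x z, 0 < δ x → ENNReal.ofReal (k x z) ≤ bb n A δ c0 x z) →
      (∀ x y z, 0 < δ x → 2 * dist x y < δ x → ‖k x z - k y z‖ₑ ≤
        C5 * (edist x y * (ENNReal.ofReal (δ x))⁻¹) * bb n A δ c0 x z) →
      ∃ w : X → V, Continuous w ∧ (∀ x, δ x ≤ 0 → w x = u x) ∧
        EF n p μ w {x | 0 < δ x} ≤ C2 * EF n p μ u A ∧
        ∀ x, 0 < δ x → ‖1 - ‖w x‖‖ₑ ^ p ≤ C2 * EF n p μ u A := by
  have hp0 : 0 < p := by linarith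
  set B : ℝ≥0∞ := ENNReal.ofReal c0 * C * ENNReal.ofReal (2 * c0) ^ n with hB
  have hBtop : B ≠ ⊤ := by have := hA.C_ne; finiteness
  set C3 : ℝ≥0∞ := C5 ^ p * B ^ (p - 1) with hC3
  have hC3t : C3 ≠ ⊤ := by
    refine ENNReal.mul_ne_top (ENNReal.rpow_ne_top_of_nonneg hp0.le hC5)
      (ENNReal.rpow_ne_top_of_nonneg (by linarith) hBtop)
  obtain ⟨C2, hC2, hE⟩ := energy_le (V := V) hA hp hc0 hC3t
  set C2' := ENNReal.ofReal c0 ^ 2 * ENNReal.ofReal (2 * c0) ^ (2 * n) with hC2'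
  refine ⟨C2 + C2', by finiteness, ?_⟩
  intro δ A u k hδ hAm hu hu1 hk hkb hkd
  have hb := measurable_bb n c0 hAm hδ.continuous
  have hu1' : ∀ z, ‖u z‖ ≤ 1 := fun z => (hu1 z).le
  set w : X → V := fun x => if 0 < δ x then avg μ (k x) u else u x with hw
  have hwin : ∀ x, 0 < δ x → w x = avg μ (k x) u := fun x hx => by simp [hw, hx]
  have hwout : ∀ x, δ x ≤ 0 → w x = u x := fun x hx => by simp [hw, hx.not_gt]
  have hlip : ∀ x y, δ x ≤ δ y + dist x y := fun x y => by
    have := hδ.dist_le_mul x y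
    rw [Real.dist_eq] at this
    have := (abs_le.1 this).2
    simp at this
    linarith
  have P1 : ∀ x a, 0 < δ x → ‖w x - a‖ₑ ^ p ≤ ∫⁻ z, bb n A δ c0 x z * ‖u z - a‖ₑ ^ p ∂μ := by
    intro x a hx
    rw [hwin x hx]
    exact avg_le hp1 (hk x hx) hu hu1' a (fun z => hkb x z hx)
  have P3 : ∀ x y, 0 < δ x → 2 * dist x y < δ x → ‖w x - w y‖ₑ ^ p ≤
        C3 * (edist x y ^ p * (ENNReal.ofReal (δ x))⁻¹ ^ p) *
          ∫⁻ z, bb n A δ c0 x z * ∫⁻ z', bb n A δ c0 x z' * ‖u z' - u z‖ₑ ^ p ∂μ ∂μ := by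
    intro x y hx hxy
    have hy : 0 < δ y := by
      have := hlip x y
      linarith [dist_nonneg (x := x) (y := y)]
    have h := avg_diff hp1 (hk x hx) (hk y hy) hu hu1' hb.of_uncurry_left
      (fun z => hkd x y z hx hxy)
    rw [← hwin x hx, ← hwin y hy] at h
    refine h.trans ?_
    rw [ENNReal.mul_rpow_of_nonneg _ _ hp0.le, ENNReal.mul_rpow_of_nonneg _ _ hp0.le]
    calc _ ≤ C5 ^ p * (edist x y ^ p * (ENNReal.ofReal (δ x))⁻¹ ^ p) *
          (B ^ (p - 1) * ∫⁻ z, bb n A δ c0 x z * ∫⁻ z', bb n A δ c0 x z' * ‖u z' - u z‖ₑ ^ p ∂μ ∂μ) := by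
          refine mul_le_mul' le_rfl (mul_le_mul' ?_ ?_)
          · exact ENNReal.rpow_le_rpow (bb_int_right hA hc0 x) (by linarith)
          · refine lintegral_mono fun z => mul_le_mul' le_rfl ?_
            rw [← enorm_neg, neg_sub]
            exact P1 x (u z) hx
      _ = _ := by rw [hC3]; ring
  refine ⟨w, ?_, hwout, ?_, ?_⟩
  · rw [continuous_iff_continuousAt]
    intro x
    by_cases hx : 0 < δ x
    · set K := C3 * (ENNReal.ofReal (δ x))⁻¹ ^ p * (B * (B * 2 ^ p)) with hK
      have hKt : K ≠ ⊤ := by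
        have : (ENNReal.ofReal (δ x))⁻¹ ^ p ≠ ⊤ :=
          ENNReal.rpow_ne_top_of_nonneg hp0.le (by simpa using hx)
        have : (2 : ℝ≥0∞) ^ p ≠ ⊤ := ENNReal.rpow_ne_top_of_nonneg hp0.le (by simp)
        finiteness
      have key : ∀ y, 2 * dist x y < δ x → edist (w y) (w x) ≤ edist y x * K ^ (1 / p) := by
        intro y hxy
        rw [edist_comm, edist_comm y x, edist_eq_enorm_sub, ← ENNReal.rpow_le_rpow_iff hp0,
          ENNReal.mul_rpow_of_nonneg _ _ hp0.le, ← ENNReal.rpow_mul, one_div_mul_cancel hp0.ne',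
          ENNReal.rpow_one]
        refine (P3 x y hx hxy).trans ?_
        have h2 : ∀ z z', ‖u z' - u z‖ₑ ^ p ≤ 2 ^ p := by
          intro z z'
          gcongr
          rw [← ofReal_norm]
          rw [show (2 : ℝ≥0∞) = ENNReal.ofReal 2 by simp]
          refine ENNReal.ofReal_le_ofReal ?_
          have := norm_sub_le (u z') (u z)
          rw [hu1, hu1] at this
          linarith
        calc _ ≤ C3 * (edist x y ^ p * (ENNReal.ofReal (δ x))⁻¹ ^ p) *
              ∫⁻ z, bb n A δ c0 x z * (B * 2 ^ p) ∂μ := by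
              refine mul_le_mul' le_rfl (lintegral_mono fun z => mul_le_mul' le_rfl ?_)
              refine (lintegral_mono fun z' => mul_le_mul' le_rfl (h2 z z')).trans ?_
              rw [lintegral_mul_const _ hb.of_uncurry_left]
              exact mul_le_mul' (bb_int_right hA hc0 x) le_rfl
          _ ≤ C3 * (edist x y ^ p * (ENNReal.ofReal (δ x))⁻¹ ^ p) * (B * (B * 2 ^ p)) := by
              refine mul_le_mul' le_rfl ?_
              rw [lintegral_mul_const _ hb.of_uncurry_left]
              exact mul_le_mul' (bb_int_right hA hc0 x) le_rfl
          _ = _ := by rw [hK]; ring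
      rw [ContinuousAt, tendsto_iff_edist_tendsto_0]
      refine tendsto_of_tendsto_of_tendsto_of_le_of_le' tendsto_const_nhds ?_
        (Filter.Eventually.of_forall fun _ => zero_le) (?_ : ∀ᶠ y in nhds x, edist (w y) (w x) ≤ edist y x * K ^ (1 / p))
      · have h1 : Filter.Tendsto (fun y => edist y x) (nhds x) (nhds 0) :=
          tendsto_iff_edist_tendsto_0.1 Filter.tendsto_id
        have := ENNReal.Tendsto.mul_const (b := K ^ (1 / p)) h1
          (Or.inr (ENNReal.rpow_ne_top_of_nonneg (by positivity) hKt))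
        simpa using this
      · filter_upwards [Metric.ball_mem_nhds x (half_pos hx)] with y hy
        apply key
        rw [Metric.mem_ball, dist_comm] at hy
        linarith
    · push Not at hx
      rw [Metric.continuousAt_iff]
      intro ε hε
      obtain ⟨η, hη, h⟩ := Metric.continuousAt_iff.1 (hu.continuousAt (x := x)) (ε / 2) (half_pos hε)
      refine ⟨η / (1 + c0), by positivity, fun {y} hy => ?_⟩
      rw [lt_div_iff₀ (by linarith)] at hy
      rw [hwout x hx]
      by_cases hy' : 0 < δ y
      swap
      · rw [hwout y (by linarith)]
        refine (h ?_).trans (by linarith)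
        nlinarith [dist_nonneg (x := y) (y := x)]
      have h3 := P1 y (u x) hy'
      rw [hwin y hy'] at h3 ⊢
      have hδy : δ y ≤ dist y x := by have := hlip y x; linarith
      have h4 := avg_le hp1 (hk y hy') hu hu1' (u x) (b := fun z => ENNReal.ofReal (k y z)) (fun z => le_rfl)
      have h5 : ∫⁻ z, ENNReal.ofReal (k y z) * ‖u z - u x‖ₑ ^ p ∂μ ≤ ENNReal.ofReal (ε / 2) ^ p := by
        calc _ ≤ ∫⁻ z, ENNReal.ofReal (k y z) * ENNReal.ofReal (ε / 2) ^ p ∂μ := by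
              refine lintegral_mono fun z => ?_
              by_cases hz : (y, z) ∈ SS A δ c0
              · refine mul_le_mul' le_rfl (ENNReal.rpow_le_rpow ?_ hp0.le)
                rw [← ofReal_norm, ← dist_eq_norm]
                refine ENNReal.ofReal_le_ofReal (h ?_).le
                have h3 := hz.2.2.1
                simp only at h3
                have := dist_triangle z y x
                rw [dist_comm z y] at this
                nlinarith
              · have := hkb y z hy'
                rw [bb_of_notMem hz, nonpos_iff_eq_zero] at this
                simp [this]
          _ = _ := by
              rw [lintegral_mul_const _ (hk y hy').meas.ennreal_ofReal, (hk y hy').lint, one_mul]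
      have h6 := h4.trans h5
      rw [ENNReal.rpow_le_rpow_iff hp0, ← ofReal_norm, ← dist_eq_norm,
        ENNReal.ofReal_le_ofReal_iff (by linarith)] at h6
      linarith
  · refine (hE δ A u w hδ hAm hu hwout P1 P3).trans ?_
    gcongr
    exact le_self_add
  · intro x hx
    rw [hwin x hx]
    refine (avg_norm hp1 (hk x hx) hu hu1 (fun z => hkb x z hx)).trans ?_
    refine (bb_dbl hc0 hAm hδ.continuous hu hAm (fun z hz => hz.2.1)).trans ?_
    gcongr
    exact le_add_self

/-- Radial projection. -/
def prj (v : V) : V := ‖v‖⁻¹ • v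

theorem prj_norm {v : V} (h : v ≠ 0) : ‖prj v‖ = 1 := by
  unfold prj
  rw [norm_smul, norm_inv, norm_norm, inv_mul_cancel₀ (norm_ne_zero_iff.2 h)]

theorem prj_of_norm {v : V} (h : ‖v‖ = 1) : prj v = v := by simp [prj, h]

theorem prj_dist {a b : V} (ha : 1 / 2 ≤ ‖a‖) (hb : 1 / 2 ≤ ‖b‖) :
    ‖prj a - prj b‖ ≤ 4 * ‖a - b‖ := by
  have ha0 : 0 < ‖a‖ := by linarith
  have hb0 : 0 < ‖b‖ := by linarith
  have e : prj a - prj b = ‖a‖⁻¹ • ((a - b) + ((‖b‖ - ‖a‖) * ‖b‖⁻¹) • b) := by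
    unfold prj
    rw [smul_add, smul_sub, smul_smul]
    have : ‖a‖⁻¹ * ((‖b‖ - ‖a‖) * ‖b‖⁻¹) = ‖a‖⁻¹ - ‖b‖⁻¹ := by field_simp
    rw [this, sub_smul]
    abel
  rw [e, norm_smul, norm_inv, norm_norm]
  have h1 : ‖(a - b) + ((‖b‖ - ‖a‖) * ‖b‖⁻¹) • b‖ ≤ 2 * ‖a - b‖ := by
    refine (norm_add_le _ _).trans ?_
    rw [norm_smul, norm_mul, norm_inv, norm_norm, mul_assoc, inv_mul_cancel₀ hb0.ne', mul_one]
    have := abs_norm_sub_norm_le b a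
    rw [norm_sub_rev b a] at this
    rw [Real.norm_eq_abs]
    linarith
  have h2 : ‖a‖⁻¹ ≤ 2 := by
    rw [inv_le_comm₀ ha0 (by norm_num)]; linarith
  calc _ ≤ 2 * (2 * ‖a - b‖) := by gcongr
    _ = _ := by ring

theorem prj_continuous {Y : Type*} [TopologicalSpace Y] {w : Y → V} (hw : Continuous w)
    (h : ∀ y, w y ≠ 0) : Continuous fun y => prj (w y) :=
  (hw.norm.inv₀ fun y => norm_ne_zero_iff.2 (h y)).smul hw

theorem prj_ff {n : ℕ} {p : ℝ} (hp : 0 ≤ p) {w : X → V} (h : ∀ x, 1 / 2 ≤ ‖w x‖) (x y : X) :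
    ff n p (fun x => prj (w x)) x y ≤ 4 ^ p * ff n p w x y := by
  unfold ff
  rw [← mul_assoc, ← ENNReal.mul_rpow_of_nonneg _ _ hp]
  gcongr
  rw [← ofReal_norm, ← ofReal_norm, show (4 : ℝ≥0∞) = ENNReal.ofReal 4 by simp,
    ← ENNReal.ofReal_mul (by norm_num)]
  exact ENNReal.ofReal_le_ofReal (prj_dist (h x) (h y))

theorem prj_EF [SFinite μ] {n : ℕ} {p : ℝ} (hp : 0 ≤ p) {w : X → V} (hw : Continuous w)
    (h : ∀ x, 1 / 2 ≤ ‖w x‖) (S : Set X) :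
    EF n p μ (fun x => prj (w x)) S ≤ 4 ^ p * EF n p μ w S := by
  unfold EF
  have hf := measurable_ff n p hw
  have mG : Measurable fun x => ∫⁻ y, ff n p w x y ∂μ := Measurable.lintegral_prod_right' hf
  rw [← lintegral_const_mul _ mG]
  refine lintegral_mono fun x => ?_
  simp only
  rw [← lintegral_const_mul _ hf.of_uncurry_left]
  exact lintegral_mono fun y => prj_ff hp h x y

end comp

end FracMin


namespace FracMin

section kern

theorem kdiff_arith {a d q1 q2 M1 M2 c1 E : ℝ} {n : ℕ} (ha : 0 < a) (hd : 0 ≤ d) (hc1 : 0 < c1)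
    (hE : 0 ≤ E)
    (hq : |q1 - q2| ≤ 127 * a * d) (hq0 : 0 ≤ q2) (hq2 : q2 ≤ 162 * a ^ 2)
    (hM1 : c1 * a ^ (n + 2) ≤ M1) (hM2 : c1 * (a / 2) ^ (n + 2) ≤ M2)
    (hM : |M1 - M2| ≤ E * a ^ (n + 1) * d) :
    |q1 / M1 - q2 / M2| ≤ (127 / c1 + 162 * E * 2 ^ (n + 2) / c1 ^ 2) * (d * a⁻¹) * (a⁻¹) ^ n := by
  have h1 : 0 < c1 * a ^ (n + 2) := by positivity
  have h2 : 0 < c1 * (a / 2) ^ (n + 2) := by positivity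
  have hM1p : 0 < M1 := by linarith
  have hM2p : 0 < M2 := by linarith
  have e : q1 / M1 - q2 / M2 = (q1 - q2) / M1 + q2 * (M2 - M1) / (M1 * M2) := by
    field_simp; ring
  rw [e]
  refine (abs_add_le _ _).trans ?_
  rw [abs_div, abs_div, abs_mul, abs_mul, abs_of_pos hM1p, abs_of_pos hM2p, abs_of_nonneg hq0,
    abs_sub_comm M2 M1]
  have t1 : |q1 - q2| / M1 ≤ 127 * a * d / (c1 * a ^ (n + 2)) := by gcongr
  have t2 : q2 * |M1 - M2| / (M1 * M2) ≤ 162 * a ^ 2 * (E * a ^ (n + 1) * d) /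
      (c1 * a ^ (n + 2) * (c1 * (a / 2) ^ (n + 2))) := by gcongr
  refine (add_le_add t1 t2).trans (le_of_eq ?_)
  simp only [div_pow, inv_pow]
  field_simp
  ring

variable {X : Type*} [MetricSpace X]

open Classical in
/-- Unnormalised averaging kernel. -/
def qq (A : Set X) (α : X → ℝ) (x z : X) : ℝ :=
  if z ∈ A then max (8 * α x - dist x z) 0 * max (α z - α x / 16) 0 else 0

theorem qq_nonneg (A : Set X) (α : X → ℝ) (x z : X) : 0 ≤ qq A α x z := by
  unfold qq; split_ifs <;> positivity

theorem lip_le {α : X → ℝ} (hα : LipschitzWith 1 α) (x y : X) : α x ≤ α y + dist x y := by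
  have := hα.dist_le_mul x y
  rw [Real.dist_eq] at this
  have := (abs_le.1 this).2
  simp at this
  linarith

theorem qq_supp {A : Set X} {α : X → ℝ} {x z : X} (hx : 0 < α x) (h : qq A α x z ≠ 0) :
    z ∈ A ∧ dist x z < 8 * α x ∧ α x / 16 < α z := by
  unfold qq at h
  split_ifs at h with hz
  · refine ⟨hz, ?_, ?_⟩
    · by_contra h1
      exact h (by rw [max_eq_right (by linarith), zero_mul])
    · by_contra h1
      exact h (by rw [max_eq_right (a := α z - α x / 16) (by linarith), mul_zero])
  · exact absurd rfl h

theorem qq_le {A : Set X} {α : X → ℝ} (hα : LipschitzWith 1 α) {x : X} (hx : 0 < α x) (z : X) :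
    qq A α x z ≤ 72 * α x ^ 2 := by
  by_cases h : qq A α x z = 0
  · rw [h]; positivity
  obtain ⟨h1, h2, h3⟩ := qq_supp hx h
  have := lip_le hα z x
  rw [dist_comm] at this
  unfold qq
  rw [if_pos h1, max_eq_left (by linarith), max_eq_left (by linarith)]
  calc _ ≤ (8 * α x) * (9 * α x) := by
        have := dist_nonneg (x := x) (y := z)
        gcongr <;> linarith
    _ = _ := by ring

theorem qq_diff {A : Set X} {α : X → ℝ} (hα : LipschitzWith 1 α) {x y : X} (hx : 0 < α x)
    (hxy : 2 * dist x y < α x) (z : X) :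
    |qq A α x z - qq A α y z| ≤ 127 * α x * dist x y ∧
      (qq A α x z - qq A α y z ≠ 0 → z ∈ A ∧ dist x z < 13 * α x ∧ α x / 32 < α z) := by
  have a1 := lip_le hα x y
  have a2 := lip_le hα y x
  rw [dist_comm] at a2
  have hy : 0 < α y := by linarith [dist_nonneg (x := x) (y := y)]
  have supp : qq A α x z - qq A α y z ≠ 0 → z ∈ A ∧ dist x z < 13 * α x ∧ α x / 32 < α z := by
    intro h
    by_cases h1 : qq A α x z = 0
    · have h2 : qq A α y z ≠ 0 := by
        intro h2; exact h (by rw [h1, h2, sub_zero])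
      obtain ⟨b1, b2, b3⟩ := qq_supp hy h2
      have := dist_triangle x y z
      exact ⟨b1, by linarith, by linarith⟩
    · obtain ⟨b1, b2, b3⟩ := qq_supp hx h1
      exact ⟨b1, by linarith, by linarith⟩
  refine ⟨?_, supp⟩
  by_cases h : qq A α x z - qq A α y z = 0
  · rw [h]; simp; positivity
  obtain ⟨b1, b2, b3⟩ := supp h
  unfold qq
  rw [if_pos b1, if_pos b1]
  have hz := lip_le hα z x
  rw [dist_comm] at hz
  set F1 := max (8 * α x - dist x z) 0
  set F2 := max (8 * α y - dist y z) 0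
  set G1 := max (α z - α x / 16) 0
  set G2 := max (α z - α y / 16) 0
  have e : F1 * G1 - F2 * G2 = (F1 - F2) * G1 + F2 * (G1 - G2) := by ring
  have hF : |F1 - F2| ≤ 9 * dist x y := by
    refine (abs_max_sub_max_le_abs _ _ _).trans ?_
    have c1 := dist_triangle x y z
    have c2 := dist_triangle y x z
    rw [dist_comm y x] at c2
    rw [abs_le]; constructor <;> linarith
  have hG : |G1 - G2| ≤ dist x y / 16 := by
    refine (abs_max_sub_max_le_abs _ _ _).trans ?_
    rw [abs_le]; constructor <;> linarith
  have hG1 : |G1| ≤ 14 * α x := by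
    rw [abs_of_nonneg (le_max_right _ _)]
    exact max_le (by linarith) (by linarith)
  have hF2 : |F2| ≤ 12 * α x := by
    rw [abs_of_nonneg (le_max_right _ _)]
    exact max_le (by linarith [dist_nonneg (x := y) (y := z)]) (by linarith)
  rw [e]
  refine (abs_add_le _ _).trans ?_
  rw [abs_mul, abs_mul]
  have := dist_nonneg (x := x) (y := y)
  calc _ ≤ 9 * dist x y * (14 * α x) + 12 * α x * (dist x y / 16) := by gcongr
    _ ≤ _ := by nlinarith [mul_nonneg hx.le this]

variable [MeasurableSpace X] [BorelSpace X] [SecondCountableTopology X] {μ : Measure X}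

theorem qq_meas {A : Set X} (hA : MeasurableSet A) {α : X → ℝ} (hα : Continuous α) (x : X) :
    Measurable (qq A α x) := by
  unfold qq
  refine Measurable.ite hA ?_ measurable_const
  have : Continuous fun z => max (8 * α x - dist x z) 0 * max (α z - α x / 16) 0 := by fun_prop
  exact this.measurable

theorem qq_int [IsFiniteMeasure μ] {A : Set X} (hA : MeasurableSet A) {α : X → ℝ}
    (hα : LipschitzWith 1 α) {x : X} (hx : 0 < α x) : Integrable (qq A α x) μ := by
  refine Integrable.of_bound (qq_meas hA hα.continuous x).aestronglyMeasurable (72 * α x ^ 2) ?_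
  refine Filter.Eventually.of_forall fun z => ?_
  rw [Real.norm_of_nonneg (qq_nonneg _ _ _ _)]
  exact qq_le hα hx z

theorem Ahl.real_up [IsFiniteMeasure μ] {n : ℕ} {c C : ℝ≥0∞} (hA : Ahl μ n c C) (x : X) {r : ℝ}
    (hr : 0 < r) : μ.real (Metric.ball x r) ≤ C.toReal * r ^ n := by
  have := ENNReal.toReal_mono (by have := hA.C_ne; finiteness) (hA.up x r hr)
  rwa [ENNReal.toReal_mul, ENNReal.toReal_pow, ENNReal.toReal_ofReal hr.le] at this

theorem Ahl.real_low [IsFiniteMeasure μ] {n : ℕ} {c C : ℝ≥0∞} (hA : Ahl μ n c C) (x : X) {r : ℝ}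
    (hr : 0 < r) (hr1 : r ≤ 1) : c.toReal * r ^ n ≤ μ.real (Metric.ball x r) := by
  have := ENNReal.toReal_mono (measure_ne_top μ _) (hA.low x r hr hr1)
  rwa [ENNReal.toReal_mul, ENNReal.toReal_pow, ENNReal.toReal_ofReal hr.le] at this

theorem low_int [IsFiniteMeasure μ] {q : X → ℝ} (hq : Integrable q μ) (h0 : ∀ z, 0 ≤ q z)
    {S : Set X} (hS : MeasurableSet S) {m : ℝ} (h : ∀ z ∈ S, m ≤ q z) :
    m * μ.real S ≤ ∫ z, q z ∂μ := by
  calc m * μ.real S = ∫ z in S, m ∂μ := by simp [mul_comm]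
    _ ≤ ∫ z in S, q z ∂μ := setIntegral_mono_on (by simp) hq.integrableOn hS h
    _ ≤ _ := setIntegral_le_integral hq (Filter.Eventually.of_forall h0)

variable {V : Type*} [NormedAddCommGroup V] [NormedSpace ℝ V] [CompleteSpace V]

theorem qq_mass [IsFiniteMeasure μ] [PreconnectedSpace X] {n : ℕ} {c C : ℝ≥0∞} (hA : Ahl μ n c C)
    (hfar : ∀ x : X, ∃ y, 1 ≤ dist y x) (x0 : X) {r : ℝ} (hr : 0 < r) (hr1 : r ≤ 1 / 2)
    {x : X} (hx : 0 < 2 * r - dist x x0) :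
    c.toReal / (32 * 16 ^ n) * (2 * r - dist x x0) ^ (n + 2) ≤
      ∫ z, qq (Metric.ball x0 (2 * r) \ Metric.ball x0 r) (fun y => 2 * r - dist y x0) x z ∂μ := by
  set α : X → ℝ := fun y => 2 * r - dist y x0 with hα
  have hL : LipschitzWith 1 α := by
    refine LipschitzWith.of_dist_le_mul fun a b => ?_
    rw [Real.dist_eq, abs_le]
    have c1 := dist_triangle a b x0
    have c2 := dist_triangle b a x0
    rw [dist_comm b a] at c2
    simp only [hα, NNReal.coe_one, one_mul]
    constructor <;> linarith
  set A := Metric.ball x0 (2 * r) \ Metric.ball x0 r with hAdef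
  have hAm : MeasurableSet A := Metric.isOpen_ball.measurableSet.diff Metric.isOpen_ball.measurableSet
  have hxα : 0 < α x := hx
  have hxr : α x ≤ 2 * r := by simp only [hα]; linarith [dist_nonneg (x := x) (y := x0)]
  have hq := qq_int (μ := μ) hAm hL hxα
  have hcr : 0 ≤ c.toReal := ENNReal.toReal_nonneg
  show c.toReal / (32 * 16 ^ n) * α x ^ (n + 2) ≤ _
  have hmemA : ∀ z, z ∈ A ↔ dist z x0 < 2 * r ∧ r ≤ dist z x0 := by
    intro z; simp [hAdef]
  by_cases hcase : 3 / 2 * r < dist x x0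
  · have hb : ∀ z ∈ Metric.ball x (α x / 4), α x ^ 2 ≤ qq A α x z := by
      intro z hz
      rw [Metric.mem_ball] at hz
      have c1 := dist_triangle x z x0
      have c2 := dist_triangle z x x0
      rw [dist_comm x z] at c1
      have hax : α x = 2 * r - dist x x0 := rfl
      have haz : α z = 2 * r - dist z x0 := rfl
      have hzA : z ∈ A := by
        rw [hmemA]; constructor <;> linarith
      unfold qq
      rw [if_pos hzA]
      have f1 : 2 * α x ≤ max (8 * α x - dist x z) 0 := by
        refine le_trans ?_ (le_max_left _ _); rw [dist_comm]; linarith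
      have f2 : α x / 2 ≤ max (α z - α x / 16) 0 := by
        refine le_trans ?_ (le_max_left _ _); linarith
      calc α x ^ 2 = 2 * α x * (α x / 2) := by ring
        _ ≤ _ := by gcongr
    refine le_trans ?_ (low_int hq (qq_nonneg A α x) Metric.isOpen_ball.measurableSet hb)
    have := hA.real_low (μ := μ) x (r := α x / 4) (by linarith) (by linarith)
    calc c.toReal / (32 * 16 ^ n) * α x ^ (n + 2)
        ≤ c.toReal / (4 ^ n) * α x ^ (n + 2) := by
          gcongr
          calc (4 : ℝ) ^ n ≤ 16 ^ n := by gcongr; norm_num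
            _ ≤ _ := by linarith [pow_pos (by norm_num : (0:ℝ) < 16) n]
      _ = α x ^ 2 * (c.toReal * (α x / 4) ^ n) := by rw [div_pow, pow_add]; field_simp
      _ ≤ _ := by gcongr
  · push Not at hcase
    obtain ⟨p0, hp0⟩ : ∃ p0 : X, dist p0 x0 = 3 / 2 * r := by
      obtain ⟨y, hy⟩ := hfar x0
      have := mem_range_of_exists_le_of_exists_ge (f := fun z => dist z x0) (c := 3 / 2 * r)
        (by fun_prop) ⟨x0, by simp; linarith⟩ ⟨y, by linarith⟩
      exact this
    have hax : α x = 2 * r - dist x x0 := rfl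
    have hb : ∀ z ∈ Metric.ball p0 (r / 8), α x ^ 2 / 32 ≤ qq A α x z := by
      intro z hz
      rw [Metric.mem_ball] at hz
      have c1 := dist_triangle p0 z x0
      have c2 := dist_triangle z p0 x0
      rw [dist_comm p0 z] at c1
      have c3 := dist_triangle x x0 z
      rw [dist_comm x0 z] at c3
      have haz : α z = 2 * r - dist z x0 := rfl
      have hzA : z ∈ A := by
        rw [hmemA]; constructor <;> linarith
      unfold qq
      rw [if_pos hzA]
      have f1 : α x / 4 ≤ max (8 * α x - dist x z) 0 := by
        refine le_trans ?_ (le_max_left _ _); linarith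
      have f2 : α x / 8 ≤ max (α z - α x / 16) 0 := by
        refine le_trans ?_ (le_max_left _ _); linarith
      calc α x ^ 2 / 32 = α x / 4 * (α x / 8) := by ring
        _ ≤ _ := by gcongr
    refine le_trans ?_ (low_int hq (qq_nonneg A α x) Metric.isOpen_ball.measurableSet hb)
    have := hA.real_low (μ := μ) p0 (r := r / 8) (by linarith) (by linarith)
    calc c.toReal / (32 * 16 ^ n) * α x ^ (n + 2)
        = α x ^ 2 / 32 * (c.toReal * (α x / 16) ^ n) := by rw [div_pow, pow_add]; field_simp
      _ ≤ α x ^ 2 / 32 * (c.toReal * (r / 8) ^ n) := by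
          gcongr α x ^ 2 / 32 * (c.toReal * ?_ ^ n)
          linarith
      _ ≤ _ := by gcongr

end kern

end FracMin


namespace FracMin

section decay

variable {X : Type*} [MetricSpace X] [MeasurableSpace X] [BorelSpace X] [SecondCountableTopology X]
variable {V : Type*} [NormedAddCommGroup V] [NormedSpace ℝ V] [CompleteSpace V]
variable {μ : Measure X}

set_option maxHeartbeats 1000000 in
theorem competitor (V : Type*) [NormedAddCommGroup V] [NormedSpace ℝ V] [CompleteSpace V]
    [IsFiniteMeasure μ] [PreconnectedSpace X] {n : ℕ} {c C : ℝ≥0∞} (hA : Ahl μ n c C)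
    {p : ℝ} (hp : (n : ℝ) < p) (hp1 : 1 < p) (hfar : ∀ x : X, ∃ y, 1 ≤ dist y x) :
    ∃ C2 : ℝ≥0∞, C2 ≠ ⊤ ∧ ∃ ε0 : ℝ≥0∞, ε0 ≠ 0 ∧ ε0 ≠ ⊤ ∧ ∀ (x0 : X) (r : ℝ), 0 < r → r ≤ 1 / 2 →
      ∀ u : X → V, Continuous u → (∀ z, ‖u z‖ = 1) →
      EF n p μ u (Metric.ball x0 (2 * r) \ Metric.ball x0 r) ≤ ε0 →
      ∃ u' : X → V, Continuous u' ∧ (∀ z, ‖u' z‖ = 1) ∧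
        (∀ z, z ∉ Metric.ball x0 (2 * r) → u' z = u z) ∧
        EF n p μ u' (Metric.ball x0 (2 * r)) ≤
          C2 * EF n p μ u (Metric.ball x0 (2 * r) \ Metric.ball x0 r) := by
  have hp0 : 0 < p := by linarith
  have hcr : 0 < c.toReal := ENNReal.toReal_pos hA.c_ne hA.c_top
  set c1 : ℝ := c.toReal / (32 * 16 ^ n) with hc1
  have hc1p : 0 < c1 := by positivity
  set c0 : ℝ := 32 + 72 / c1 with hc0
  have hc0p : 32 ≤ c0 := by have : 0 < 72 / c1 := by positivity
                            linarith
  set E : ℝ := 127 * (C.toReal * 13 ^ n) with hE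
  have hE0 : 0 ≤ E := by positivity
  set C5 : ℝ := 127 / c1 + 162 * E * 2 ^ (n + 2) / c1 ^ 2 with hC5
  have hC50 : 0 ≤ C5 := by positivity
  obtain ⟨C2, hC2, H⟩ := comp_of_kernel (V := V) hA hp hp1 (by linarith : 1 ≤ c0)
    (ENNReal.ofReal_ne_top (r := C5))
  refine ⟨4 ^ p * C2, ENNReal.mul_ne_top (ENNReal.rpow_ne_top_of_nonneg hp0.le (by simp)) hC2,
    ENNReal.ofReal (1 / 2) ^ p / (C2 + 1), ?_, ?_, ?_⟩
  · refine (ENNReal.div_pos ?_ (by finiteness)).ne'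
    simp [ENNReal.rpow_eq_zero_iff, hp0.not_gt]
  · refine ENNReal.div_ne_top (ENNReal.rpow_ne_top_of_nonneg hp0.le (by simp)) (by simp)
  intro x0 r hr hr1 u hu hu1 hsmall
  set α : X → ℝ := fun y => 2 * r - dist y x0 with hα
  have hL : LipschitzWith 1 α := by
    refine LipschitzWith.of_dist_le_mul fun a b => ?_
    rw [Real.dist_eq, abs_le]
    have c1 := dist_triangle a b x0
    have c2 := dist_triangle b a x0
    rw [dist_comm b a] at c2
    simp only [hα, NNReal.coe_one, one_mul]
    constructor <;> linarith
  set A := Metric.ball x0 (2 * r) \ Metric.ball x0 r with hAdef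
  have hAm : MeasurableSet A := Metric.isOpen_ball.measurableSet.diff Metric.isOpen_ball.measurableSet
  have hΩ : {x | 0 < α x} = Metric.ball x0 (2 * r) := by
    ext x; simp [hα]
  set M : X → ℝ := fun x => ∫ z, qq A α x z ∂μ with hM
  have hMl : ∀ x, 0 < α x → c1 * α x ^ (n + 2) ≤ M x := fun x hx =>
    qq_mass hA hfar x0 hr hr1 hx
  have hMp : ∀ x, 0 < α x → 0 < M x := fun x hx => lt_of_lt_of_le (by positivity) (hMl x hx)
  have hbbr : ∀ x z, 0 < α x → (x, z) ∈ SS A α c0 →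
      bb n A α c0 x z = ENNReal.ofReal (c0 * (α x)⁻¹ ^ n) := by
    intro x z hx h
    rw [bb_of_mem h, ENNReal.ofReal_mul (by linarith), ENNReal.ofReal_pow (by positivity),
      ENNReal.ofReal_inv_of_pos hx]
  refine Exists.elim (H α A u (fun x z => qq A α x z / M x) hL hAm hu hu1 ?_ ?_ ?_) ?_
  · intro x hx
    refine ⟨(qq_meas hAm hL.continuous x).div_const _,
      fun z => div_nonneg (qq_nonneg _ _ _ _) (hMp x hx).le, (qq_int hAm hL hx).div_const _, ?_⟩
    rw [integral_div]
    exact div_self (hMp x hx).ne'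
  · intro x z hx
    by_cases h : qq A α x z = 0
    · simp [h]
    obtain ⟨h1, h2, h3⟩ := qq_supp hx h
    have hS : (x, z) ∈ SS A α c0 := ⟨hx, h1, by simp only; nlinarith, by simp only; nlinarith⟩
    rw [hbbr x z hx hS]
    refine ENNReal.ofReal_le_ofReal ?_
    calc qq A α x z / M x ≤ 72 * α x ^ 2 / (c1 * α x ^ (n + 2)) := by
          have := qq_le (A := A) hL hx z
          have := hMl x hx
          gcongr
      _ = 72 / c1 * (α x)⁻¹ ^ n := by rw [inv_pow, pow_add]; field_simp
      _ ≤ _ := by gcongr; linarith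
  · intro x y z hx hxy
    have a1 := lip_le hL x y
    have a2 := lip_le hL y x
    rw [dist_comm] at a2
    have hd0 := dist_nonneg (x := x) (y := y)
    have hy2 : α x / 2 ≤ α y := by linarith
    have hy : 0 < α y := by linarith
    have hMd : |M x - M y| ≤ E * α x ^ (n + 1) * dist x y := by
      simp only [hM]
      rw [← integral_sub (qq_int hAm hL hx) (qq_int hAm hL hy), ← Real.norm_eq_abs]
      have hg : Integrable ((Metric.ball x (13 * α x)).indicator
          (fun _ => 127 * α x * dist x y)) μ :=
        (integrable_const _).indicator Metric.isOpen_ball.measurableSet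
      refine (norm_integral_le_of_norm_le hg (Filter.Eventually.of_forall fun z => ?_)).trans ?_
      · obtain ⟨q1, q2⟩ := qq_diff (A := A) hL hx hxy z
        by_cases hq : qq A α x z - qq A α y z = 0
        · rw [hq, norm_zero]
          exact Set.indicator_nonneg (fun _ _ => by positivity) _
        · have hz : z ∈ Metric.ball x (13 * α x) := by
            rw [Metric.mem_ball, dist_comm]; exact (q2 hq).2.1
          rw [Set.indicator_of_mem hz]
          exact q1
      · rw [integral_indicator Metric.isOpen_ball.measurableSet]
        simp only [integral_const, MeasurableSet.univ, measureReal_restrict_apply, Set.univ_inter,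
          smul_eq_mul]
        have := hA.real_up (μ := μ) x (r := 13 * α x) (by linarith)
        calc _ ≤ C.toReal * (13 * α x) ^ n * (127 * α x * dist x y) := by gcongr
          _ = _ := by rw [hE, mul_pow, pow_succ]; ring
    obtain ⟨q1, q2⟩ := qq_diff (A := A) hL hx hxy z
    have hqy : qq A α y z ≤ 162 * α x ^ 2 := by
      refine (qq_le hL hy z).trans ?_
      have : α y ≤ 3 / 2 * α x := by linarith
      calc 72 * α y ^ 2 ≤ 72 * (3 / 2 * α x) ^ 2 := by gcongr
        _ = _ := by ring
    have hMy : c1 * (α x / 2) ^ (n + 2) ≤ M y := by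
      refine le_trans ?_ (hMl y hy)
      gcongr
    have key := kdiff_arith hx hd0 hc1p hE0 q1 (qq_nonneg _ _ _ _) hqy (hMl x hx) hMy hMd
    by_cases hS : (x, z) ∈ SS A α c0
    · rw [hbbr x z hx hS, edist_dist, ← ENNReal.ofReal_inv_of_pos hx, ← ENNReal.ofReal_mul hd0,
        ← ENNReal.ofReal_mul hC50, ← ENNReal.ofReal_mul (by positivity), ← ofReal_norm]
      refine ENNReal.ofReal_le_ofReal ?_
      rw [Real.norm_eq_abs]
      refine key.trans ?_
      have : (α x)⁻¹ ^ n ≤ c0 * (α x)⁻¹ ^ n := le_mul_of_one_le_left (by positivity) (by linarith)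
      gcongr
    · have z1 : qq A α x z = 0 := by
        by_contra h
        obtain ⟨h1, h2, h3⟩ := qq_supp hx h
        exact hS ⟨hx, h1, by simp only; nlinarith, by simp only; nlinarith⟩
      have z2 : qq A α y z = 0 := by
        by_contra h
        obtain ⟨h1, h2, h3⟩ := q2 (by rw [z1, zero_sub]; exact neg_ne_zero.2 h)
        exact hS ⟨hx, h1, by simp only; nlinarith, by simp only; nlinarith⟩
      simp [z1, z2]
  rintro w ⟨hwc, hwout, hwE, hwn⟩
  have hhalf : ∀ x, 1 / 2 ≤ ‖w x‖ := by
    intro x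
    by_cases hx : 0 < α x
    swap
    · rw [hwout x (by linarith), hu1]; norm_num
    have h1 : ‖1 - ‖w x‖‖ₑ ^ p ≤ ENNReal.ofReal (1 / 2) ^ p := by
      refine (hwn x hx).trans ?_
      calc C2 * EF n p μ u A ≤ (C2 + 1) * (ENNReal.ofReal (1 / 2) ^ p / (C2 + 1)) := by
            gcongr
            exact le_self_add
        _ = _ := ENNReal.mul_div_cancel (by simp) (by finiteness)
    rw [ENNReal.rpow_le_rpow_iff hp0, ← ofReal_norm, ENNReal.ofReal_le_ofReal_iff (by norm_num),
      Real.norm_eq_abs, abs_le] at h1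
    linarith
  have hne : ∀ x, w x ≠ 0 := fun x h => by
    have := hhalf x
    rw [h, norm_zero] at this
    linarith
  refine ⟨fun x => prj (w x), prj_continuous hwc hne, fun z => prj_norm (hne z), ?_, ?_⟩
  · intro z hz
    rw [← hΩ] at hz
    simp only [Set.mem_setOf_eq, not_lt] at hz
    simp only [hwout z hz]
    exact prj_of_norm (hu1 z)
  · refine (prj_EF hp0.le hwc hhalf _).trans ?_
    rw [mul_assoc]
    gcongr
    rw [← hΩ]
    exact hwE

theorem hole [SFinite μ] {n : ℕ} {p : ℝ} {u u' : X → V} (hu : Continuous u) (hu' : Continuous u')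
    {Ω : Set X} (hΩ : MeasurableSet Ω) (h : ∀ z, z ∉ Ω → u' z = u z) {η : ℝ≥0∞}
    (hfin : EF n p μ u Set.univ ≠ ⊤) (hE : EF n p μ u Set.univ ≤ EF n p μ u' Set.univ + η) :
    EF n p μ u Ω ≤ 2 * EF n p μ u' Ω + η := by
  have split : ∀ v : X → V, Continuous v → EF n p μ v Set.univ = EF n p μ v Ω +
      ((∫⁻ x in Ωᶜ, ∫⁻ y in Ω, ff n p v x y ∂μ ∂μ) + ∫⁻ x in Ωᶜ, ∫⁻ y in Ωᶜ, ff n p v x y ∂μ ∂μ) := by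
    intro v hv
    have hf := measurable_ff n p hv
    have m1 : Measurable fun x => ∫⁻ y in Ω, ff n p v x y ∂μ := Measurable.lintegral_prod_right' hf
    unfold EF
    rw [← lintegral_add_left m1, Measure.restrict_univ, ← lintegral_add_compl _ hΩ]
    congr 1
    refine lintegral_congr fun x => ?_
    rw [lintegral_add_compl _ hΩ]
  have hL : ∫⁻ x in Ωᶜ, ∫⁻ y in Ωᶜ, ff n p u' x y ∂μ ∂μ = ∫⁻ x in Ωᶜ, ∫⁻ y in Ωᶜ, ff n p u x y ∂μ ∂μ := by
    refine setLIntegral_congr_fun hΩ.compl fun x hx => ?_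
    refine setLIntegral_congr_fun hΩ.compl fun y hy => ?_
    simp only [ff, h x hx, h y hy]
  have hS : ∫⁻ x in Ωᶜ, ∫⁻ y in Ω, ff n p u' x y ∂μ ∂μ ≤ EF n p μ u' Ω := by
    rw [lintegral_lintegral_swap (measurable_ff n p hu').aemeasurable]
    unfold EF
    refine lintegral_mono fun y => ?_
    simp only
    rw [lintegral_congr fun x => ff_symm n p u' x y]
    exact setLIntegral_le_lintegral _ _
  have h1 := split u hu
  have h2 := split u' hu'
  rw [hL] at h2
  set L := ∫⁻ x in Ωᶜ, ∫⁻ y in Ωᶜ, ff n p u x y ∂μ ∂μ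
  have hLfin : L ≠ ⊤ := by
    refine ne_top_of_le_ne_top hfin ?_
    rw [h1, ← add_assoc]
    exact le_add_self
  have : EF n p μ u Ω + L ≤ (2 * EF n p μ u' Ω + η) + L := by
    calc EF n p μ u Ω + L ≤ EF n p μ u Set.univ := by
          rw [h1]; gcongr; exact le_add_self
      _ ≤ EF n p μ u' Set.univ + η := hE
      _ ≤ EF n p μ u' Ω + (EF n p μ u' Ω + L) + η := by rw [h2]; gcongr
      _ = _ := by ring
  exact (ENNReal.add_le_add_iff_right hLfin).1 this

theorem EF_mono {n : ℕ} {p : ℝ} {u : X → V} {S T : Set X} (h : S ⊆ T) :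
    EF n p μ u S ≤ EF n p μ u T := lintegral_mono_set h

theorem decay (V : Type*) [NormedAddCommGroup V] [NormedSpace ℝ V] [CompleteSpace V]
    [IsFiniteMeasure μ] [PreconnectedSpace X] {n : ℕ} {c C : ℝ≥0∞} (hA : Ahl μ n c C)
    {p : ℝ} (hp : (n : ℝ) < p) (hp1 : 1 < p) (hfar : ∀ x : X, ∃ y, 1 ≤ dist y x)
    {M : ℝ} (hM : 0 < M) {R : ℝ} (hR : 0 < R) (hR1 : R ≤ 1) :
    ∃ θ : ℝ, 0 < θ ∧ θ < 1 ∧ ∀ (u : X → V) (η : ℝ), 0 ≤ η → Continuous u → (∀ z, ‖u z‖ = 1) →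
      EF n p μ u Set.univ ≤ ENNReal.ofReal M →
      (∀ (u' : X → V) (x0 : X), Continuous u' → (∀ z, ‖u' z‖ = 1) →
        (∀ z, z ∉ Metric.ball x0 R → u' z = u z) →
        EF n p μ u Set.univ ≤ EF n p μ u' Set.univ + ENNReal.ofReal η) →
      ∀ (x0 : X) (j : ℕ), EF n p μ u (Metric.ball x0 ((1 / 2) ^ j * R)) ≤
        ENNReal.ofReal (θ ^ j * M + η / (1 - θ)) := by
  obtain ⟨C2, hC2, ε0, hε0, hε0t, H⟩ := competitor V hA hp hp1 hfar
  set K : ℝ := 2 * C2.toReal with hK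
  have hK0 : 0 ≤ K := by positivity
  set e : ℝ := ε0.toReal with he
  have he0 : 0 < e := ENNReal.toReal_pos hε0 hε0t
  set θ : ℝ := max ((K + 1) / (K + 2)) (1 - e / M) with hθ
  have hθ0 : 0 < θ := lt_of_lt_of_le (by positivity) (le_max_left _ _)
  have hθ1 : θ < 1 := by
    refine max_lt ?_ ?_
    · rw [div_lt_one (by positivity)]; linarith
    · have : 0 < e / M := by positivity
      linarith
  refine ⟨θ, hθ0, hθ1, ?_⟩
  intro u η hη hu hu1 hEM hmin x0
  have hfin : ∀ S, EF n p μ u S ≠ ⊤ := fun S =>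
    ne_top_of_le_ne_top ENNReal.ofReal_ne_top ((EF_mono (Set.subset_univ S)).trans hEM)
  have hle : ∀ S, (EF n p μ u S).toReal ≤ M := fun S =>
    ENNReal.toReal_le_of_le_ofReal hM.le ((EF_mono (Set.subset_univ S)).trans hEM)
  have step : ∀ r, 0 < r → 2 * r ≤ R → (EF n p μ u (Metric.ball x0 r)).toReal ≤
      θ * (EF n p μ u (Metric.ball x0 (2 * r))).toReal + η := by
    intro r hr hrR
    set F1 := (EF n p μ u (Metric.ball x0 r)).toReal with hF1
    set F2 := (EF n p μ u (Metric.ball x0 (2 * r))).toReal with hF2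
    set G := (EF n p μ u (Metric.ball x0 (2 * r) \ Metric.ball x0 r)).toReal with hG
    have hF1n : 0 ≤ F1 := ENNReal.toReal_nonneg
    have hF2n : 0 ≤ F2 := ENNReal.toReal_nonneg
    have hsum : F1 + G = F2 := by
      rw [hF1, hG, ← ENNReal.toReal_add (hfin _) (hfin _), hF2]
      congr 1
      have := lintegral_inter_add_sdiff (μ := μ) (fun x => ∫⁻ y, ff n p u x y ∂μ)
        (Metric.ball x0 (2 * r)) (Metric.isOpen_ball (x := x0) (ε := r)).measurableSet
      rw [Set.inter_eq_right.2 (Metric.ball_subset_ball (by linarith))] at this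
      exact this
    by_cases hsm : EF n p μ u (Metric.ball x0 (2 * r) \ Metric.ball x0 r) ≤ ε0
    · obtain ⟨u', hu'c, hu'1, hu'o, hu'E⟩ := H x0 r hr (by linarith) u hu hu1 hsm
      have h1 := hmin u' x0 hu'c hu'1
        (fun z hz => hu'o z fun h => hz (Metric.ball_subset_ball hrR h))
      have h2 := hole hu hu'c (Metric.isOpen_ball.measurableSet) hu'o (hfin _) h1
      have h3 : EF n p μ u (Metric.ball x0 (2 * r)) ≤
          2 * (C2 * EF n p μ u (Metric.ball x0 (2 * r) \ Metric.ball x0 r)) + ENNReal.ofReal η := by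
        refine h2.trans ?_
        gcongr
      have h4 := ENNReal.toReal_mono (by have := hfin (Metric.ball x0 (2 * r) \ Metric.ball x0 r); finiteness) h3
      rw [ENNReal.toReal_add (by have := hfin (Metric.ball x0 (2 * r) \ Metric.ball x0 r); finiteness)
        ENNReal.ofReal_ne_top, ENNReal.toReal_mul, ENNReal.toReal_mul, ENNReal.toReal_ofReal hη] at h4
      have h5 : F2 ≤ K * G + η := by
        refine h4.trans (le_of_eq ?_); rw [hK]; simp; ring
      have h6 : (K + 2) * F1 ≤ (K + 1) * F2 + η := by
        have hGn : 0 ≤ G := ENNReal.toReal_nonneg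
        have : G = F2 - F1 := by linarith
        rw [this] at h5 hGn
        nlinarith
      calc F1 ≤ ((K + 1) * F2 + η) / (K + 2) := by rw [le_div_iff₀ (by positivity)]; linarith
        _ = (K + 1) / (K + 2) * F2 + η / (K + 2) := by ring
        _ ≤ θ * F2 + η := by
            gcongr
            · exact le_max_left _ _
            · exact div_le_self hη (by linarith)
    · push Not at hsm
      have hG1 : e ≤ G := ENNReal.toReal_mono (hfin _) hsm.le
      have hF2M : F2 ≤ M := hle _
      calc F1 = F2 - G := by linarith
        _ ≤ F2 - e := by linarith
        _ ≤ (1 - e / M) * F2 := by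
            have : e / M * F2 ≤ e / M * M := by gcongr
            rw [div_mul_cancel₀ _ hM.ne'] at this
            linarith
        _ ≤ θ * F2 := by gcongr; exact le_max_right _ _
        _ ≤ _ := by linarith
  have main : ∀ j : ℕ, (EF n p μ u (Metric.ball x0 ((1 / 2) ^ j * R))).toReal ≤
        θ ^ j * M + η / (1 - θ) := by
    intro j
    induction j with
    | zero =>
      refine (hle _).trans ?_
      have : 0 ≤ η / (1 - θ) := div_nonneg hη (by linarith)
      simp; linarith
    | succ j ih =>
      have hj : (0 : ℝ) < (1 / 2) ^ (j + 1) * R := by positivity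
      have e2 : 2 * ((1 / 2) ^ (j + 1) * R) = (1 / 2) ^ j * R := by rw [pow_succ]; ring
      have h1 := step _ hj (by
        rw [e2]
        exact mul_le_of_le_one_left hR.le (pow_le_one₀ (by norm_num) (by norm_num)))
      rw [e2] at h1
      refine h1.trans ?_
      calc _ ≤ θ * (θ ^ j * M + η / (1 - θ)) + η := by gcongr
        _ = _ := by
          have : 1 - θ ≠ 0 := by linarith
          field_simp
          ring
  intro j
  rw [← ENNReal.ofReal_toReal (hfin (Metric.ball x0 ((1 / 2) ^ j * R)))]
  exact ENNReal.ofReal_le_ofReal (main j)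

end decay

end FracMin


namespace FracMin

section moll

variable {X : Type*} [MetricSpace X] [CompactSpace X] [MeasurableSpace X] [BorelSpace X]
  [CommGroup X] [ContinuousMul X] [IsIsometricSMul X X]
variable {V : Type*} [NormedAddCommGroup V] [NormedSpace ℝ V] [CompleteSpace V]
variable {μ : Measure X} [IsFiniteMeasure μ] [μ.IsMulLeftInvariant]

/-- The mass of the cone of height `R`. -/
def mm (μ : Measure X) (R : ℝ) : ℝ := ∫ z, max (R - dist 1 z) 0 ∂μ

/-- The mollifying kernel. -/
def kR (μ : Measure X) (R : ℝ) (x z : X) : ℝ := max (R - dist x z) 0 / mm μ R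

theorem cone_int (R : ℝ) (x : X) : Integrable (fun z => max (R - dist x z) 0) μ := by
  have hc : Continuous fun z => max (R - dist x z) 0 := by fun_prop
  exact hc.integrable_of_hasCompactSupport (HasCompactSupport.of_compactSpace _)

theorem mm_eq (R : ℝ) (x : X) : ∫ z, max (R - dist x z) 0 ∂μ = mm μ R := by
  rw [mm, ← integral_mul_left_eq_self (fun z => max (R - dist x z) 0) x]
  refine integral_congr_ae (Filter.Eventually.of_forall fun z => ?_)
  have : dist x (x * z) = dist 1 z := by
    conv_lhs => rw [← mul_one x, mul_assoc, one_mul]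
    exact dist_mul_left x 1 z
  simp only [this]

theorem mm_low {n : ℕ} {c C : ℝ≥0∞} (hA : Ahl μ n c C) {R : ℝ} (hR : 0 < R) (hR1 : R ≤ 1) :
    c.toReal / 2 ^ (n + 1) * R ^ (n + 1) ≤ mm μ R := by
  have h := low_int (μ := μ) (cone_int R 1) (fun z => le_max_right _ _)
    (Metric.isOpen_ball (x := (1 : X)) (ε := R / 2)).measurableSet (m := R / 2) (fun z hz => by
      rw [Metric.mem_ball, dist_comm] at hz
      exact le_max_of_le_left (by linarith))
  refine le_trans ?_ h
  have := hA.real_low (μ := μ) 1 (r := R / 2) (by linarith) (by linarith)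
  calc _ = R / 2 * (c.toReal * (R / 2) ^ n) := by rw [div_pow, pow_succ, pow_succ]; field_simp
    _ ≤ _ := by gcongr

theorem mm_pos {n : ℕ} {c C : ℝ≥0∞} (hA : Ahl μ n c C) {R : ℝ} (hR : 0 < R) : 0 < mm μ R := by
  have hcr : 0 < c.toReal := ENNReal.toReal_pos hA.c_ne hA.c_top
  have h1 : 0 < mm μ (min R 1) :=
    lt_of_lt_of_le (by positivity) (mm_low hA (by positivity) (min_le_right _ _))
  refine h1.trans_le ?_
  refine integral_mono (cone_int _ _) (cone_int _ _) fun z => ?_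
  simp only
  gcongr
  exact min_le_left _ _

theorem kR_wt {n : ℕ} {c C : ℝ≥0∞} (hA : Ahl μ n c C) {R : ℝ} (hR : 0 < R) (x : X) :
    Wt μ (kR μ R x) := by
  have hm := mm_pos hA hR
  have hc : Continuous fun z => max (R - dist x z) 0 := by fun_prop
  refine ⟨hc.measurable.div_const _, fun z => div_nonneg (le_max_right _ _) hm.le,
    (cone_int R x).div_const _, ?_⟩
  unfold kR
  rw [integral_div, mm_eq]
  exact div_self hm.ne'

theorem kR_supp {R : ℝ} {x z : X} (h : kR μ R x z ≠ 0) : dist x z < R := by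
  by_contra h1
  apply h
  unfold kR
  rw [max_eq_right (by linarith), zero_div]

/-- Mollification. -/
def moll (μ : Measure X) (R : ℝ) (u : X → V) (x : X) : V := avg μ (kR μ R x) u

theorem moll_eq (R : ℝ) (u : X → V) (x : X) :
    moll μ R u x = avg μ (kR μ R 1) (fun h => u (x * h)) := by
  unfold moll avg
  rw [← integral_mul_left_eq_self (fun z => kR μ R x z • u z) x]
  refine integral_congr_ae (Filter.Eventually.of_forall fun z => ?_)
  have : dist x (x * z) = dist 1 z := by
    conv_lhs => rw [← mul_one x, mul_assoc, one_mul]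
    exact dist_mul_left x 1 z
  simp only [kR, this]

theorem avg_close {k : X → ℝ} (hk : Wt μ k) {u : X → V} (hu : Continuous u)
    (hb : ∀ z, ‖u z‖ ≤ 1) (a : V) {ε : ℝ} (h : ∀ z, k z ≠ 0 → ‖u z - a‖ ≤ ε) :
    ‖avg μ k u - a‖ ≤ ε := by
  rw [avg_sub hk hu hb]
  refine (norm_integral_le_of_norm_le (hk.int.mul_const ε) (Filter.Eventually.of_forall fun z => ?_)).trans ?_
  · rw [norm_smul, Real.norm_of_nonneg (hk.nonneg z)]
    by_cases hz : k z = 0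
    · simp [hz]
    · have := hk.nonneg z
      gcongr
      exact h z hz
  · rw [integral_mul_const, hk.one, one_mul]

/-- Local estimates for the mollification. -/
theorem moll_est {n : ℕ} {c C : ℝ≥0∞} (hA : Ahl μ n c C) {p : ℝ} (hp1 : 1 < p) :
    ∃ C7 : ℝ, 0 < C7 ∧ ∀ (u : X → V), Continuous u → (∀ z, ‖u z‖ = 1) → ∀ R, 0 < R → R ≤ 1 →
      ∀ x, ‖1 - ‖moll μ R u x‖‖ₑ ^ p ≤ ENNReal.ofReal C7 * EF n p μ u (Metric.ball x R) ∧
        ‖moll μ R u x - moll μ (R / 2) u x‖ₑ ^ p ≤ ENNReal.ofReal C7 * EF n p μ u (Metric.ball x R) := by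
  have hp0 : 0 < p := by linarith
  have hcr : 0 < c.toReal := ENNReal.toReal_pos hA.c_ne hA.c_top
  set c1 := c.toReal / 2 ^ (n + 1) with hc1
  have hc1p : 0 < c1 := by positivity
  set c0 : ℝ := 1 + 2 ^ n / c1 with hc0
  have hc0p : 1 ≤ c0 := by
    have : 0 < 2 ^ n / c1 := by positivity
    linarith
  refine ⟨c0 ^ 2 * (2 * c0) ^ (2 * n), by positivity, ?_⟩
  intro u hu hu1 R hR hR1 x
  set A := Metric.ball x R with hAdef
  have hAm : MeasurableSet A := Metric.isOpen_ball.measurableSet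
  set δ : X → ℝ := fun _ => R with hδ
  have hu1' : ∀ z, ‖u z‖ ≤ 1 := fun z => (hu1 z).le
  have dbl := bb_dbl (μ := μ) (n := n) (p := p) hc0p hAm (continuous_const : Continuous δ) hu
    (x := x) hAm (fun z hz => hz.2.1)
  rw [← ENNReal.ofReal_pow (by linarith), ← ENNReal.ofReal_pow (by linarith),
    ← ENNReal.ofReal_mul (by positivity)] at dbl
  have kb : ∀ r, R / 2 ≤ r → r ≤ R → ∀ z, ENNReal.ofReal (kR μ r x z) ≤ bb n A δ c0 x z := by
    intro r hr1 hr2 z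
    by_cases h : kR μ r x z = 0
    · simp [h]
    have hr : 0 < r := by linarith
    have hd := kR_supp h
    have hS : (x, z) ∈ SS A δ c0 := by
      refine ⟨hR, ?_, ?_, ?_⟩
      · rw [hAdef, Metric.mem_ball, dist_comm]; simp only; linarith
      · simp only [hδ]; nlinarith
      · simp only [hδ]; nlinarith
    rw [bb_of_mem hS, ← ENNReal.ofReal_inv_of_pos hR, ← ENNReal.ofReal_pow (by positivity),
      ← ENNReal.ofReal_mul (by linarith)]
    refine ENNReal.ofReal_le_ofReal ?_
    have hm := mm_low hA hr (by linarith)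
    unfold kR
    calc max (r - dist x z) 0 / mm μ r ≤ r / (c1 * r ^ (n + 1)) := by
          gcongr
          exact max_le (by linarith [dist_nonneg (x := x) (y := z)]) hr.le
      _ = 1 / c1 * (r⁻¹) ^ n := by rw [pow_succ, inv_pow]; field_simp
      _ ≤ 1 / c1 * (2 * R⁻¹) ^ n := by
          gcongr
          rw [inv_le_comm₀ hr (by positivity), mul_inv, inv_inv]
          linarith
      _ = 2 ^ n / c1 * (R⁻¹) ^ n := by rw [mul_pow]; ring
      _ ≤ _ := by gcongr; linarith
  refine ⟨?_, ?_⟩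
  · exact (avg_norm hp1 (kR_wt hA hR x) hu hu1 (kb R (by linarith) le_rfl)).trans dbl
  · refine (avg_le hp1 (kR_wt hA hR x) hu hu1' _ (kb R (by linarith) le_rfl)).trans ?_
    refine le_trans (lintegral_mono fun z => mul_le_mul' le_rfl ?_) dbl
    rw [← enorm_neg, neg_sub]
    exact avg_le hp1 (kR_wt hA (half_pos hR) x) hu hu1' _ (kb (R / 2) le_rfl (by linarith))

theorem moll_lip {n : ℕ} {c C : ℝ≥0∞} (hA : Ahl μ n c C) {u : X → V} (hu : Continuous u)
    (hu1 : ∀ z, ‖u z‖ ≤ 1) {R : ℝ} (hR : 0 < R) (x y : X) :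
    ‖moll μ R u x - moll μ R u y‖ ≤ μ.real Set.univ / mm μ R * dist x y := by
  have hm := mm_pos hA hR
  unfold moll avg
  rw [← integral_sub ((kR_wt hA hR x).integrable_smul hu hu1) ((kR_wt hA hR y).integrable_smul hu hu1)]
  refine (norm_integral_le_of_norm_le_const (C := dist x y / mm μ R)
    (Filter.Eventually.of_forall fun z => ?_)).trans (le_of_eq (by ring))
  rw [← sub_smul, norm_smul]
  refine (mul_le_of_le_one_right (norm_nonneg _) (hu1 z)).trans ?_
  unfold kR
  rw [← sub_div, norm_div, Real.norm_of_nonneg hm.le]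
  gcongr
  rw [Real.norm_eq_abs]
  refine (abs_max_sub_max_le_abs _ _ _).trans ?_
  have c1 := dist_triangle x y z
  have c2 := dist_triangle y x z
  rw [dist_comm y x] at c2
  rw [abs_le]; constructor <;> linarith

theorem moll_cont {n : ℕ} {c C : ℝ≥0∞} (hA : Ahl μ n c C) {u : X → V} (hu : Continuous u)
    (hu1 : ∀ z, ‖u z‖ ≤ 1) {R : ℝ} (hR : 0 < R) : Continuous (moll μ R u) := by
  have hm := mm_pos hA hR
  refine (LipschitzWith.of_dist_le_mul (K := Real.toNNReal (μ.real Set.univ / mm μ R))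
    fun x y => ?_).continuous
  rw [dist_eq_norm, Real.coe_toNNReal _ (div_nonneg measureReal_nonneg hm.le)]
  exact moll_lip hA hu hu1 hR x y

set_option maxHeartbeats 1000000 in
theorem moll_energy {n : ℕ} {c C : ℝ≥0∞} (hA : Ahl μ n c C) {p : ℝ} (hp1 : 1 < p) {u : X → V}
    (hu : Continuous u) (hu1 : ∀ z, ‖u z‖ ≤ 1) {R : ℝ} (hR : 0 < R) :
    EF n p μ (moll μ R u) Set.univ ≤ EF n p μ u Set.univ := by
  have hp0 : 0 < p := by linarith
  have hk := kR_wt hA hR 1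
  set κ : X → ℝ≥0∞ := fun h => ENNReal.ofReal (kR μ R 1 h) with hκ
  have mκ : Measurable κ := hk.meas.ennreal_ofReal
  have hf := measurable_ff n p hu
  have hKK : ∀ x y h : X, KK n (x * h) (y * h) = KK n x y := by
    intro x y h
    simp only [KK]
    rw [mul_comm x, mul_comm y, edist_mul_left]
  have pt : ∀ x y, ff n p (moll μ R u) x y ≤ ∫⁻ h, κ h * ff n p u (x * h) (y * h) ∂μ := by
    intro x y
    have hc : ∀ a, Continuous fun h => u (a * h) := fun a => hu.comp (continuous_const_mul a)
    have hg : Measurable fun h => ‖u (x * h) - u (y * h)‖ₑ := by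
      have h1 := hc x
      have h2 := hc y
      have : Continuous fun h => ‖u (x * h) - u (y * h)‖ₑ := by fun_prop
      exact this.measurable
    have h1 : ‖moll μ R u x - moll μ R u y‖ₑ ^ p ≤ ∫⁻ h, κ h * ‖u (x * h) - u (y * h)‖ₑ ^ p ∂μ := by
      calc _ ≤ (∫⁻ h, κ h * ‖u (x * h) - u (y * h)‖ₑ ∂μ) ^ p := by
            rw [moll_eq, moll_eq]
            unfold avg
            rw [← integral_sub (hk.integrable_smul (hc x) fun _ => hu1 _)
              (hk.integrable_smul (hc y) fun _ => hu1 _)]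
            gcongr
            refine (enorm_integral_le_lintegral_enorm _).trans (le_of_eq ?_)
            refine lintegral_congr fun z => ?_
            rw [← smul_sub, enorm_smul, Real.enorm_eq_ofReal (hk.nonneg z)]
        _ ≤ _ := jensen μ hp1 mκ hg
        _ = _ := by rw [hk.lint, ENNReal.one_rpow, one_mul]
    unfold ff
    simp only [hKK]
    refine (mul_le_mul' h1 le_rfl).trans (le_of_eq ?_)
    have m2 : Measurable fun h => κ h * ‖u (x * h) - u (y * h)‖ₑ ^ p := mκ.mul (hg.pow_const p)
    rw [← lintegral_mul_const _ m2]
    simp only [mul_assoc]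
  have hmul : Measurable fun r : X × X => r.1 * r.2 := continuous_mul.measurable
  have m3 : Measurable fun r : (X × X) × X => κ r.2 * ff n p u (r.1.1 * r.2) (r.1.2 * r.2) := by
    refine (mκ.comp measurable_snd).mul (hf.comp (Measurable.prodMk ?_ ?_))
    · exact hmul.comp (by fun_prop : Measurable fun r : (X × X) × X => (r.1.1, r.2))
    · exact hmul.comp (by fun_prop : Measurable fun r : (X × X) × X => (r.1.2, r.2))
  unfold EF
  rw [Measure.restrict_univ]
  calc ∫⁻ x, ∫⁻ y, ff n p (moll μ R u) x y ∂μ ∂μ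
      ≤ ∫⁻ x, ∫⁻ y, ∫⁻ h, κ h * ff n p u (x * h) (y * h) ∂μ ∂μ ∂μ :=
        lintegral_mono fun x => lintegral_mono fun y => pt x y
    _ = ∫⁻ x, ∫⁻ h, ∫⁻ y, κ h * ff n p u (x * h) (y * h) ∂μ ∂μ ∂μ := by
        refine lintegral_congr fun x => ?_
        rw [lintegral_lintegral_swap]
        exact (m3.comp (by fun_prop : Measurable fun r : X × X => ((x, r.1), r.2))).aemeasurable
    _ = ∫⁻ h, ∫⁻ x, ∫⁻ y, κ h * ff n p u (x * h) (y * h) ∂μ ∂μ ∂μ := by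
        rw [lintegral_lintegral_swap]
        refine Measurable.aemeasurable ?_
        apply Measurable.lintegral_prod_right'
          (f := fun r : (X × X) × X => κ r.1.2 * ff n p u (r.1.1 * r.1.2) (r.2 * r.1.2))
        exact m3.comp (by fun_prop : Measurable fun r : (X × X) × X => ((r.1.1, r.2), r.1.2))
    _ = ∫⁻ h, κ h * ∫⁻ x, ∫⁻ y, ff n p u x y ∂μ ∂μ ∂μ := by
        refine lintegral_congr fun h => ?_
        have mh : Measurable fun x : X => x * h := (continuous_mul_const h).measurable
        have e1 : ∀ x, ∫⁻ y, κ h * ff n p u (x * h) (y * h) ∂μ = κ h * ∫⁻ y, ff n p u (x * h) y ∂μ := by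
          intro x
          have m5 : Measurable fun y => ff n p u (x * h) (y * h) :=
            hf.comp (measurable_const.prodMk mh)
          rw [lintegral_const_mul _ m5]
          congr 1
          refine Eq.trans (lintegral_congr fun y => ?_)
            (lintegral_mul_left_eq_self (μ := μ) (fun y => ff n p u (x * h) y) h)
          rw [mul_comm y h]
        simp only [e1]
        have mG : Measurable fun x => ∫⁻ y, ff n p u x y ∂μ := Measurable.lintegral_prod_right' hf
        have mG' : Measurable fun x => ∫⁻ y, ff n p u (x * h) y ∂μ := mG.comp mh
        rw [lintegral_const_mul _ mG']
        congr 1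
        refine Eq.trans (lintegral_congr fun x => ?_)
          (lintegral_mul_left_eq_self (μ := μ) (fun x => ∫⁻ y, ff n p u x y ∂μ) h)
        rw [mul_comm x h]
    _ = _ := by
        rw [lintegral_mul_const _ mκ, hk.lint, one_mul]

open Classical in
/-- The mollification homotopy. -/
def vv (μ : Measure X) (u : X → V) (q : ℝ × X) : V :=
  if 0 < q.1 then moll μ q.1 u q.2 else u q.2

theorem vv_cont {n : ℕ} {c C : ℝ≥0∞} (hA : Ahl μ n c C) {u : X → V} (hu : Continuous u)
    (hu1 : ∀ z, ‖u z‖ ≤ 1) : Continuous (vv μ u) := by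
  rw [continuous_iff_continuousAt]
  rintro ⟨ρ, x⟩
  by_cases hρ : 0 < ρ
  · have hN : Continuous fun q : ℝ × X => ∫ z in Set.univ, max (q.1 - dist q.2 z) 0 • u z ∂μ := by
      refine continuous_parametric_integral_of_continuous
        (f := fun (q : ℝ × X) z => max (q.1 - dist q.2 z) 0 • u z) ?_ isCompact_univ
      unfold Function.uncurry
      fun_prop
    have hm : Continuous fun R : ℝ => ∫ z in Set.univ, max (R - dist (1 : X) z) 0 ∂μ := by
      refine continuous_parametric_integral_of_continuous
        (f := fun (R : ℝ) z => max (R - dist (1 : X) z) 0) ?_ isCompact_univ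
      unfold Function.uncurry
      fun_prop
    simp only [Measure.restrict_univ] at hN hm
    have h1 : ContinuousAt (fun q : ℝ × X => (mm μ q.1)⁻¹ • ∫ z, max (q.1 - dist q.2 z) 0 • u z ∂μ) (ρ, x) := by
      refine ContinuousAt.smul (ContinuousAt.inv₀ ?_ (mm_pos hA hρ).ne') hN.continuousAt
      exact (hm.comp continuous_fst).continuousAt
    refine h1.congr ?_
    have : {q : ℝ × X | 0 < q.1} ∈ nhds (ρ, x) :=
      (isOpen_lt continuous_const continuous_fst).mem_nhds hρ
    filter_upwards [this] with q hq
    have hq : 0 < q.1 := hq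
    simp only [vv, hq, if_true, moll, avg, kR]
    rw [← integral_smul]
    refine integral_congr_ae (Filter.Eventually.of_forall fun z => ?_)
    simp only [smul_smul]
    rw [div_eq_inv_mul]
  · rw [Metric.continuousAt_iff]
    intro ε hε
    obtain ⟨η, hη, h⟩ := Metric.continuousAt_iff.1 (hu.continuousAt (x := x)) (ε / 2) (half_pos hε)
    refine ⟨η / 2, by positivity, ?_⟩
    rintro ⟨ρ', x'⟩ hd
    rw [Prod.dist_eq, max_lt_iff] at hd
    obtain ⟨d1, d2⟩ := hd
    simp only at d1 d2
    have e1 : vv μ u (ρ, x) = u x := by simp [vv, hρ]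
    rw [e1]
    by_cases hρ' : 0 < ρ'
    · have e2 : vv μ u (ρ', x') = moll μ ρ' u x' := by simp [vv, hρ']
      rw [e2, dist_eq_norm]
      refine lt_of_le_of_lt (avg_close (kR_wt hA hρ' x') hu hu1 _ (ε := ε / 2) fun z hz => ?_) (by linarith)
      rw [← dist_eq_norm]
      refine (h ?_).le
      have := kR_supp hz
      have := dist_triangle z x' x
      rw [dist_comm z x'] at this
      rw [Real.dist_eq] at d1
      have := le_abs_self (ρ' - ρ)
      linarith
    · have e2 : vv μ u (ρ', x') = u x' := by simp [vv, hρ']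
      rw [e2]
      exact (h (by linarith)).trans (by linarith)

end moll

end FracMin


namespace FracMin

section exist

variable {X : Type*} [MetricSpace X] [CompactSpace X] [MeasurableSpace X] [BorelSpace X]
  [CommGroup X] [ContinuousMul X] [IsIsometricSMul X X]
variable {V : Type*} [NormedAddCommGroup V] [NormedSpace ℝ V] [CompleteSpace V]
variable {μ : Measure X} [IsFiniteMeasure μ] [μ.IsMulLeftInvariant]

theorem lip_fin {n : ℕ} {c C : ℝ≥0∞} (hA : Ahl μ n c C) {p : ℝ} (hp : (n : ℝ) < p) {w : X → V}
    {L : ℝ} (hL : ∀ x y, ‖w x - w y‖ ≤ L * dist x y) : EF n p μ w Set.univ < ⊤ := by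
  have hp0 : 0 < p := lt_of_le_of_lt (Nat.cast_nonneg n) hp
  obtain ⟨C1, hC1, h1⟩ := near_int hA hp
  set r := Metric.diam (Set.univ : Set X) + 1 with hr
  have hr0 : 0 < r := by have := Metric.diam_nonneg (s := (Set.univ : Set X)); linarith
  have hb : ∀ x : X, Metric.ball x r = Set.univ := by
    intro x
    ext y
    simp only [Metric.mem_ball, Set.mem_univ, iff_true]
    have := Metric.dist_le_diam_of_mem (isCompact_univ (X := X)).isBounded (Set.mem_univ y) (Set.mem_univ x)
    linarith
  have pt : ∀ x y, ff n p w x y ≤ ENNReal.ofReal L ^ p * (edist x y ^ p * KK n x y) := by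
    intro x y
    unfold ff
    rw [← mul_assoc, ← ENNReal.mul_rpow_of_nonneg _ _ hp0.le]
    gcongr
    rw [edist_dist, ← ofReal_norm]
    by_cases h : 0 ≤ L
    · rw [← ENNReal.ofReal_mul h]
      exact ENNReal.ofReal_le_ofReal (hL x y)
    · have := hL x y
      have h2 : L * dist x y ≤ 0 := mul_nonpos_of_nonpos_of_nonneg (not_le.1 h).le dist_nonneg
      rw [ENNReal.ofReal_of_nonpos (this.trans h2)]
      exact zero_le
  unfold EF
  rw [Measure.restrict_univ]
  have hLp : ENNReal.ofReal L ^ p ≠ ⊤ := ENNReal.rpow_ne_top_of_nonneg hp0.le ENNReal.ofReal_ne_top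
  have hrp : ENNReal.ofReal r ^ (p - n) ≠ ⊤ :=
    ENNReal.rpow_ne_top_of_nonneg (by linarith) ENNReal.ofReal_ne_top
  calc ∫⁻ x, ∫⁻ y, ff n p w x y ∂μ ∂μ
      ≤ ∫⁻ x, ENNReal.ofReal L ^ p * (C1 * ENNReal.ofReal r ^ (p - n)) ∂μ := by
        refine lintegral_mono fun x => ?_
        refine (lintegral_mono (pt x)).trans ?_
        rw [lintegral_const_mul' _ _ hLp]
        gcongr
        have := h1 x r hr0
        rwa [hb x, Measure.restrict_univ] at this
    _ < ⊤ := by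
        rw [lintegral_const]
        exact ENNReal.mul_lt_top (ENNReal.mul_lt_top hLp.lt_top
          (ENNReal.mul_lt_top hC1.lt_top hrp.lt_top)) (measure_lt_top _ _)

theorem fatou {n : ℕ} {p : ℝ} (hp : 0 < p) {w : ℕ → X → V} (hw : ∀ k, Continuous (w k)) {W : X → V}
    (hW : ∀ x, Filter.Tendsto (fun k => w k x) Filter.atTop (nhds (W x))) {a : ℕ → ℝ≥0∞} {I : ℝ≥0∞}
    (ha : Filter.Tendsto a Filter.atTop (nhds I)) (h : ∀ k, EF n p μ (w k) Set.univ ≤ a k) :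
    EF n p μ W Set.univ ≤ I := by
  have hf := fun k => measurable_ff n p (hw k)
  have pt : ∀ x y, ff n p W x y ≤ Filter.liminf (fun k => ff n p (w k) x y) Filter.atTop := by
    intro x y
    by_cases hxy : x = y
    · subst hxy
      simp [ff, hp]
    · refine le_of_eq (Filter.Tendsto.liminf_eq ?_).symm
      unfold ff
      refine ENNReal.Tendsto.mul_const ?_ (Or.inr ?_)
      · refine (ENNReal.continuous_rpow_const.tendsto _).comp ?_
        exact ((continuous_enorm).tendsto _).comp ((hW x).sub (hW y))
      · unfold KK
        refine ENNReal.pow_ne_top (ENNReal.inv_ne_top.2 ?_)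
        simpa using hxy
  unfold EF at h ⊢
  rw [Measure.restrict_univ] at h ⊢
  calc ∫⁻ x, ∫⁻ y, ff n p W x y ∂μ ∂μ
      ≤ ∫⁻ x, Filter.liminf (fun k => ∫⁻ y, ff n p (w k) x y ∂μ) Filter.atTop ∂μ := by
        refine lintegral_mono fun x => ?_
        refine (lintegral_mono (pt x)).trans ?_
        exact lintegral_liminf_le fun k => (hf k).of_uncurry_left
    _ ≤ Filter.liminf (fun k => ∫⁻ x, ∫⁻ y, ff n p (w k) x y ∂μ ∂μ) Filter.atTop :=
        lintegral_liminf_le fun k => Measurable.lintegral_prod_right' (hf k)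
    _ ≤ Filter.liminf a Filter.atTop := Filter.liminf_le_liminf (Filter.Eventually.of_forall h)
    _ = I := ha.liminf_eq

theorem real_of_enorm {E : Type*} [NormedAddCommGroup E] {p : ℝ} (hp : 0 < p) {v : E} {B : ℝ}
    (hB : 0 ≤ B) (h : ‖v‖ₑ ^ p ≤ ENNReal.ofReal B) : ‖v‖ ≤ B ^ (1 / p) := by
  rw [← ofReal_norm, ENNReal.ofReal_rpow_of_nonneg (norm_nonneg _) hp.le,
    ENNReal.ofReal_le_ofReal_iff hB] at h
  calc ‖v‖ = (‖v‖ ^ p) ^ (1 / p) := by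
        rw [← Real.rpow_mul (norm_nonneg _), mul_one_div_cancel hp.ne', Real.rpow_one]
    _ ≤ _ := Real.rpow_le_rpow (by positivity) h (by positivity)

/-- The invariance properties of the class in which we minimise. -/
structure Cls (R : ℝ) (𝒞 : (X → V) → Prop) : Prop where
  cont : ∀ u, 𝒞 u → Continuous u
  unit : ∀ u, 𝒞 u → ∀ z, ‖u z‖ = 1
  loc : ∀ u u' x0, 𝒞 u → Continuous u' → (∀ z, ‖u' z‖ = 1) →
    (∀ z, z ∉ Metric.ball x0 R → u' z = u z) → 𝒞 u'
  homot : ∀ u (H : unitInterval × X → V), 𝒞 u → Continuous H → (∀ z, ‖H z‖ = 1) →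
    (∀ x, H (0, x) = u x) → 𝒞 (fun x => H (1, x))

theorem Cls.moll {R : ℝ} {𝒞 : (X → V) → Prop} (hC : Cls R 𝒞) {n : ℕ} {c C : ℝ≥0∞}
    (hA : Ahl μ n c C) {u : X → V} (hu : 𝒞 u) {ρ : ℝ} (hρ : 0 < ρ)
    (h : ∀ r, 0 < r → r ≤ ρ → ∀ x, moll μ r u x ≠ 0) : 𝒞 (fun x => prj (moll μ ρ u x)) := by
  have hv := vv_cont hA (hC.cont u hu) (fun z => (hC.unit u hu z).le)
  have hne : ∀ z : unitInterval × X, vv μ u ((z.1 : ℝ) * ρ, z.2) ≠ 0 := by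
    intro z
    unfold vv
    split_ifs with h0
    · exact h _ h0 (mul_le_of_le_one_left hρ.le z.1.2.2) _
    · intro h1
      have := hC.unit u hu z.2
      simp only at h1
      rw [h1, norm_zero] at this
      exact zero_ne_one this
  have := hC.homot u (fun z => prj (vv μ u ((z.1 : ℝ) * ρ, z.2))) hu
    (prj_continuous (hv.comp (by fun_prop)) hne) (fun z => prj_norm (hne z)) (fun x => by
      have : vv μ u (0, x) = u x := by simp [vv]
      simp only [Set.Icc.coe_zero, zero_mul, this]
      exact prj_of_norm (hC.unit u hu x))
  have e : ∀ x, vv μ u (ρ, x) = FracMin.moll μ ρ u x := by intro x; simp [vv, hρ]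
  simpa only [Set.Icc.coe_one, one_mul, e] using this

theorem Cls.near {R : ℝ} {𝒞 : (X → V) → Prop} (hC : Cls R 𝒞) {w W : X → V} (hw : Continuous w)
    (hW : Continuous W) (hW1 : ∀ z, ‖W z‖ = 1) (hu : 𝒞 (fun x => prj (w x)))
    (h : ∀ x, ‖w x - W x‖ < 1) : 𝒞 W := by
  have hne : ∀ z : unitInterval × X, (1 - (z.1 : ℝ)) • w z.2 + (z.1 : ℝ) • W z.2 ≠ 0 := by
    intro z h0
    have e : (1 - (z.1 : ℝ)) • (w z.2 - W z.2) = - W z.2 := by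
      rw [← sub_eq_zero, ← h0]; module
    have h1 : ‖(1 - (z.1 : ℝ)) • (w z.2 - W z.2)‖ = 1 := by rw [e, norm_neg, hW1]
    rw [norm_smul, Real.norm_of_nonneg (by linarith [z.1.2.2])] at h1
    have := h z.2
    have h3 := z.1.2.1
    have h4 := z.1.2.2
    nlinarith [norm_nonneg (w z.2 - W z.2)]
  have := hC.homot _ (fun z => prj ((1 - (z.1 : ℝ)) • w z.2 + (z.1 : ℝ) • W z.2)) hu
    (prj_continuous (by fun_prop) hne) (fun z => prj_norm (hne z)) (fun x => by simp)
  have e : (fun x => prj (W x)) = W := funext fun x => prj_of_norm (hW1 x)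
  simpa [e] using this

theorem Cls.fin {R : ℝ} {𝒞 : (X → V) → Prop} (hC : Cls R 𝒞) {n : ℕ} {c C : ℝ≥0∞}
    (hA : Ahl μ n c C) {p : ℝ} (hp : (n : ℝ) < p) {u : X → V} (hu : 𝒞 u) :
    ∃ v, 𝒞 v ∧ EF n p μ v Set.univ < ⊤ := by
  have hc := hC.cont u hu
  have h1 := hC.unit u hu
  have h1' : ∀ z, ‖u z‖ ≤ 1 := fun z => (h1 z).le
  obtain ⟨δ, hδ, h⟩ := Metric.uniformContinuous_iff.1
    (CompactSpace.uniformContinuous_of_continuous hc) (1 / 2) (by norm_num)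
  have key : ∀ r, 0 < r → r ≤ δ → ∀ x, 1 / 2 ≤ ‖FracMin.moll μ r u x‖ := by
    intro r hr hrδ x
    have : ‖FracMin.moll μ r u x - u x‖ ≤ 1 / 2 := by
      refine avg_close (kR_wt hA hr x) hc h1' _ fun z hz => ?_
      rw [← dist_eq_norm]
      have := kR_supp hz
      rw [dist_comm] at this
      exact (h (by linarith)).le
    have h2 := norm_sub_norm_le (u x) (FracMin.moll μ r u x)
    rw [norm_sub_rev, h1] at h2
    linarith
  refine ⟨_, hC.moll hA hu hδ fun r hr hrδ x h0 => ?_, ?_⟩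
  · have := key r hr hrδ x
    rw [h0, norm_zero] at this
    norm_num at this
  · refine lip_fin hA hp (L := 4 * (μ.real Set.univ / mm μ δ)) fun x y => ?_
    refine (prj_dist (key δ hδ le_rfl x) (key δ hδ le_rfl y)).trans ?_
    rw [mul_assoc]
    have := moll_lip hA hc h1' hδ x y
    linarith

/-- The abstract existence theorem. -/
theorem Cls.exists_min [PreconnectedSpace X] [ProperSpace V] {R : ℝ} (hR : 0 < R) (hR1 : R ≤ 1)
    {𝒞 : (X → V) → Prop} (hC : Cls R 𝒞) {n : ℕ} {c C : ℝ≥0∞}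
    (hA : Ahl μ n c C) {p : ℝ} (hp : (n : ℝ) < p) (hp1 : 1 < p)
    (hfar : ∀ x : X, ∃ y, 1 ≤ dist y x) {u₀ : X → V} (hu₀ : 𝒞 u₀) :
    ∃ W, 𝒞 W ∧ EF n p μ W Set.univ < ⊤ ∧
      ∀ v, 𝒞 v → EF n p μ W Set.univ ≤ EF n p μ v Set.univ := by
  have hp0 : 0 < p := by linarith
  set I : ℝ≥0∞ := ⨅ v, ⨅ (_ : 𝒞 v), EF n p μ v Set.univ with hI
  have hIle : ∀ v, 𝒞 v → I ≤ EF n p μ v Set.univ := fun v hv => iInf₂_le v hv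
  have hIt : I < ⊤ := by
    obtain ⟨v, hv, hf⟩ := hC.fin hA hp hu₀
    exact (hIle v hv).trans_lt hf
  set M : ℝ := I.toReal + 1 with hM
  have hM0 : 0 < M := by positivity
  obtain ⟨θ, hθ0, hθ1, hdec⟩ := decay V hA hp hp1 hfar hM0 hR hR1
  have h1θ : 0 < 1 - θ := by linarith
  have ex : ∀ k : ℕ, ∃ u, 𝒞 u ∧ EF n p μ u Set.univ < I + ENNReal.ofReal (θ ^ k) := by
    intro k
    have : I < I + ENNReal.ofReal (θ ^ k) :=
      ENNReal.lt_add_right hIt.ne (by simpa using pow_pos hθ0 k)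
    obtain ⟨v, h⟩ := iInf_lt_iff.1 (show (⨅ v, ⨅ (_ : 𝒞 v), EF n p μ v Set.univ) < _ from this)
    obtain ⟨hv, h⟩ := iInf_lt_iff.1 h
    exact ⟨v, hv, h⟩
  choose u huC huE using ex
  have huc := fun k => hC.cont _ (huC k)
  have hu1 := fun k => hC.unit _ (huC k)
  have hu1' : ∀ k z, ‖u k z‖ ≤ 1 := fun k z => (hu1 k z).le
  set C8 : ℝ := M + 1 / (1 - θ) with hC8
  have hC8p : 0 < C8 := by positivity
  have F : ∀ k j, j ≤ k → ∀ x, EF n p μ (u k) (Metric.ball x ((1 / 2) ^ j * R)) ≤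
      ENNReal.ofReal (C8 * θ ^ j) := by
    intro k j hjk x
    refine (hdec (u k) (θ ^ k) (by positivity) (huc k) (hu1 k) ?_ ?_ x j).trans ?_
    · refine (huE k).le.trans ?_
      rw [hM, ENNReal.ofReal_add (by positivity) (by norm_num), ENNReal.ofReal_toReal hIt.ne]
      gcongr
      exact pow_le_one₀ hθ0.le hθ1.le
    · intro u' x0 hc' h1' he
      exact (huE k).le.trans (add_le_add (hIle _ (hC.loc _ _ x0 (huC k) hc' h1' he)) le_rfl)
    · refine ENNReal.ofReal_le_ofReal ?_
      have h1 : θ ^ k ≤ θ ^ j := pow_le_pow_of_le_one hθ0.le hθ1.le hjk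
      have h2 : θ ^ k / (1 - θ) ≤ θ ^ j / (1 - θ) := by gcongr
      have h3 : C8 * θ ^ j = θ ^ j * M + θ ^ j / (1 - θ) := by rw [hC8]; ring
      linarith
  obtain ⟨C7, hC7, hest⟩ := moll_est (V := V) hA hp1
  set lam : ℝ := θ ^ (1 / p) with hlam
  have hl0 : 0 < lam := by positivity
  have hl1 : lam < 1 := Real.rpow_lt_one hθ0.le hθ1 (by positivity)
  have h1l : 0 < 1 - lam := by linarith
  set A : ℝ := (C7 * C8) ^ (1 / p) with hAdef
  have hA0 : 0 < A := by positivity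
  have hAl : ∀ j : ℕ, (C7 * (C8 * θ ^ j)) ^ (1 / p) = A * lam ^ j := by
    intro j
    rw [← mul_assoc, Real.mul_rpow (by positivity) (by positivity), hlam, ← Real.rpow_natCast,
      ← Real.rpow_mul hθ0.le, mul_comm (j : ℝ), Real.rpow_mul hθ0.le, Real.rpow_natCast]
  have hRj : ∀ j : ℕ, 0 < (1 / 2 : ℝ) ^ j * R := fun j => by positivity
  have hRj1 : ∀ j : ℕ, (1 / 2 : ℝ) ^ j * R ≤ 1 := fun j =>
    mul_le_one₀ (pow_le_one₀ (by norm_num) (by norm_num)) hR.le hR1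
  have st1 : ∀ k j, j ≤ k → ∀ x, ‖FracMin.moll μ ((1 / 2) ^ j * R) (u k) x -
      FracMin.moll μ ((1 / 2) ^ (j + 1) * R) (u k) x‖ ≤ A * lam ^ j := by
    intro k j hjk x
    have h := (hest (u k) (huc k) (hu1 k) _ (hRj j) (hRj1 j) x).2
    have e : (1 / 2 : ℝ) ^ j * R / 2 = (1 / 2) ^ (j + 1) * R := by rw [pow_succ]; ring
    rw [e] at h
    rw [← hAl]
    refine real_of_enorm hp0 (by positivity) (h.trans ?_)
    rw [ENNReal.ofReal_mul hC7.le]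
    exact mul_le_mul' le_rfl (F k j hjk x)
  have st2 : ∀ k r, 0 < r → r ≤ (1 / 2) ^ k * R → ∀ x,
      ‖1 - ‖FracMin.moll μ r (u k) x‖‖ ≤ A * lam ^ k := by
    intro k r hr hrk x
    have h := (hest (u k) (huc k) (hu1 k) r hr (hrk.trans (hRj1 k)) x).1
    rw [← hAl]
    refine real_of_enorm hp0 (by positivity) (h.trans ?_)
    rw [ENNReal.ofReal_mul hC7.le]
    exact mul_le_mul' le_rfl ((EF_mono (Metric.ball_subset_ball hrk)).trans (F k k le_rfl x))
  set C9 : ℝ := A / (1 - lam) with hC9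
  have hC9p : 0 < C9 := by positivity
  set w : ℕ → X → V := fun k => FracMin.moll μ ((1 / 2) ^ k * R) (u k) with hw
  have hwc : ∀ k, Continuous (w k) := fun k => moll_cont hA (huc k) (hu1' k) (hRj k)
  have st3 : ∀ k i, i ≤ k → ∀ x, ‖FracMin.moll μ ((1 / 2) ^ i * R) (u k) x - w k x‖ ≤ C9 * lam ^ i := by
    intro k i hik x
    have : ∀ j, i ≤ j → j ≤ k → ‖FracMin.moll μ ((1 / 2) ^ i * R) (u k) x -
        FracMin.moll μ ((1 / 2) ^ j * R) (u k) x‖ ≤ C9 * (lam ^ i - lam ^ j) := by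
      intro j hij
      induction j, hij using Nat.le_induction with
      | base => intro _; simp
      | succ j hij ih =>
        intro hjk
        have a1 := ih (by omega)
        have a2 := st1 k j (by omega) x
        have a3 := norm_sub_le_norm_sub_add_norm_sub (FracMin.moll μ ((1 / 2) ^ i * R) (u k) x)
          (FracMin.moll μ ((1 / 2) ^ j * R) (u k) x) (FracMin.moll μ ((1 / 2) ^ (j + 1) * R) (u k) x)
        have a4 : A * lam ^ j = C9 * (lam ^ j - lam ^ (j + 1)) := by
          rw [hC9, pow_succ]; field_simp
        linarith
    refine (this k hik le_rfl).trans ?_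
    have : 0 < lam ^ k := by positivity
    nlinarith
  have hcr : 0 < c.toReal := ENNReal.toReal_pos hA.c_ne hA.c_top
  set L : ℕ → ℝ := fun j => μ.real Set.univ / (c.toReal / 2 ^ (n + 1) * ((1 / 2) ^ j * R) ^ (n + 1))
    with hL
  have hL0 : ∀ j, 0 ≤ L j := fun j => div_nonneg measureReal_nonneg (by positivity)
  have hLmono : ∀ i j, i ≤ j → L i ≤ L j := by
    intro i j hij
    simp only [hL]
    have : (1 / 2 : ℝ) ^ j ≤ (1 / 2) ^ i := pow_le_pow_of_le_one (by norm_num) (by norm_num) hij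
    have := measureReal_nonneg (μ := μ) (s := Set.univ)
    gcongr
  have hLip : ∀ k j x y, ‖FracMin.moll μ ((1 / 2) ^ j * R) (u k) x -
      FracMin.moll μ ((1 / 2) ^ j * R) (u k) y‖ ≤ L j * dist x y := by
    intro k j x y
    refine (moll_lip hA (huc k) (hu1' k) (hRj j) x y).trans ?_
    have := measureReal_nonneg (μ := μ) (s := Set.univ)
    have := mm_low (μ := μ) hA (hRj j) (hRj1 j)
    simp only [hL]
    gcongr
  have eqc : ∀ i k x y, ‖w k x - w k y‖ ≤ 2 * C9 * lam ^ i + L i * dist x y := by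
    intro i k x y
    by_cases hik : i ≤ k
    · have a1 := st3 k i hik x
      have a2 := st3 k i hik y
      have a3 := hLip k i x y
      have e : w k x - w k y = -(FracMin.moll μ ((1 / 2) ^ i * R) (u k) x - w k x) +
        (FracMin.moll μ ((1 / 2) ^ i * R) (u k) x - FracMin.moll μ ((1 / 2) ^ i * R) (u k) y) +
        (FracMin.moll μ ((1 / 2) ^ i * R) (u k) y - w k y) := by abel
      rw [e]
      refine (norm_add₃_le).trans ?_
      rw [norm_neg]
      linarith
    · have a1 := hLip k k x y
      have a2 : L k * dist x y ≤ L i * dist x y :=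
        mul_le_mul_of_nonneg_right (hLmono k i (by omega)) dist_nonneg
      have : 0 ≤ 2 * C9 * lam ^ i := by positivity
      simp only [hw]
      linarith
  have hlim : Filter.Tendsto (fun i : ℕ => lam ^ i) Filter.atTop (nhds 0) :=
    tendsto_pow_atTop_nhds_zero_of_lt_one hl0.le hl1
  have hAlim : Filter.Tendsto (fun i : ℕ => A * lam ^ i) Filter.atTop (nhds 0) := by
    simpa using hlim.const_mul A
  have hnb : ∀ k x, ‖w k x‖ ≤ 1 + A := by
    intro k x
    have h := st2 k _ (hRj k) le_rfl x
    rw [Real.norm_eq_abs, abs_le] at h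
    have h2 : A * lam ^ k ≤ A := mul_le_of_le_one_right hA0.le (pow_le_one₀ hl0.le hl1.le)
    simp only [hw]
    linarith [h.1]
  set f : ℕ → BoundedContinuousFunction X V := fun k => BoundedContinuousFunction.mkOfCompact ⟨w k, hwc k⟩ with hf
  have hfw : ∀ k x, f k x = w k x := fun k x => rfl
  have hcomp : IsCompact (closure (Set.range f)) := by
    refine BoundedContinuousFunction.arzela_ascoli (Metric.closedBall (0 : V) (1 + A))
      (isCompact_closedBall _ _) _ ?_ ?_
    · rintro g x ⟨k, rfl⟩
      rw [mem_closedBall_zero_iff]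
      exact hnb k x
    · intro x0
      rw [Metric.equicontinuousAt_iff]
      intro ε hε
      have h2 : Filter.Tendsto (fun i : ℕ => 2 * C9 * lam ^ i) Filter.atTop (nhds 0) := by
        simpa using hlim.const_mul (2 * C9)
      obtain ⟨i, hi⟩ := (h2.eventually_lt_const (half_pos hε)).exists
      refine ⟨ε / (2 * (L i + 1)), by have := hL0 i; positivity, ?_⟩
      rintro x hx ⟨g, k, rfl⟩
      simp only
      rw [hfw, hfw, dist_eq_norm]
      have h3 := eqc i k x0 x
      rw [lt_div_iff₀ (by have := hL0 i; positivity), dist_comm] at hx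
      have h4 : 0 ≤ dist x0 x := dist_nonneg
      nlinarith
  obtain ⟨W, -, φ, hφ, hWt⟩ := hcomp.tendsto_subseq (fun k => subset_closure (Set.mem_range_self k))
  have hpt : ∀ x, Filter.Tendsto (fun k => w (φ k) x) Filter.atTop (nhds (W x)) := by
    intro x
    have h := ((continuous_eval_const (F := BoundedContinuousFunction X V) x).tendsto W).comp hWt
    exact h
  have hW1 : ∀ x, ‖W x‖ = 1 := by
    intro x
    have h1 := ((hpt x).norm.const_sub 1).norm
    have h2 : Filter.Tendsto (fun k => ‖1 - ‖w (φ k) x‖‖) Filter.atTop (nhds 0) :=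
      squeeze_zero (fun _ => norm_nonneg _) (fun k => st2 (φ k) _ (hRj _) le_rfl x)
        (hAlim.comp hφ.tendsto_atTop)
    have h3 := tendsto_nhds_unique h1 h2
    rw [norm_eq_zero] at h3
    linarith
  have hE : EF n p μ W Set.univ ≤ I := by
    have hθl : Filter.Tendsto (fun i : ℕ => θ ^ i) Filter.atTop (nhds 0) :=
      tendsto_pow_atTop_nhds_zero_of_lt_one hθ0.le hθ1
    have ha : Filter.Tendsto (fun k => I + ENNReal.ofReal (θ ^ φ k)) Filter.atTop (nhds I) := by
      have h1 := (ENNReal.tendsto_ofReal (hθl.comp hφ.tendsto_atTop)).const_add I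
      simpa using h1
    exact fatou hp0 (fun k => hwc (φ k)) hpt ha fun k =>
      (moll_energy hA hp1 (huc _) (hu1' _) (hRj _)).trans (huE _).le
  have hWC : 𝒞 W := by
    have e1 := (hAlim.comp hφ.tendsto_atTop).eventually_lt_const (one_half_pos)
    have e2 := (Metric.tendsto_nhds.1 hWt) 1 one_pos
    obtain ⟨k, h1, h2⟩ := (e1.and e2).exists
    refine hC.near (hwc (φ k)) W.continuous hW1 (hC.moll hA (huC (φ k)) (hRj _) ?_) ?_
    · intro r hr hrk x h0
      have := st2 (φ k) r hr hrk x
      rw [h0] at this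
      simp only [Function.comp] at h1
      norm_num at this
      linarith
    · intro x
      have := (BoundedContinuousFunction.dist_coe_le_dist (f := f (φ k)) (g := W) x).trans_lt h2
      rwa [dist_eq_norm] at this
  exact ⟨W, hWC, hE.trans_lt hIt, fun v hv => hE.trans (hIle v hv)⟩

end exist

end FracMin


namespace FracMin

section torus

variable {n : ℕ}

/-- First coordinates. -/
def re (x : Torus n) (i : Fin n) : ℝ := x.1 (i, 0)

/-- Second coordinates. -/
def im (x : Torus n) (i : Fin n) : ℝ := x.1 (i, 1)

theorem re_im (x : Torus n) (i : Fin n) : re x i ^ 2 + im x i ^ 2 = 1 := x.2 i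

/-- A point of the torus from its coordinates. -/
def tmk (a b : Fin n → ℝ) (h : ∀ i, a i ^ 2 + b i ^ 2 = 1) : Torus n :=
  ⟨WithLp.toLp 2 fun q => if q.2 = 0 then a q.1 else b q.1, fun i => by simpa using h i⟩

@[simp] theorem re_tmk (a b : Fin n → ℝ) (h) (i : Fin n) : re (tmk a b h) i = a i := by
  simp [re, tmk]

@[simp] theorem im_tmk (a b : Fin n → ℝ) (h) (i : Fin n) : im (tmk a b h) i = b i := by
  simp [im, tmk]

theorem text {x y : Torus n} (h0 : ∀ i, re x i = re y i) (h1 : ∀ i, im x i = im y i) : x = y := by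
  apply Subtype.ext
  ext ⟨i, j⟩
  fin_cases j
  · exact h0 i
  · exact h1 i

theorem tdist (x y : Torus n) :
    dist x y ^ 2 = ∑ i, ((re x i - re y i) ^ 2 + (im x i - im y i) ^ 2) := by
  rw [Subtype.dist_eq, EuclideanSpace.dist_eq, Real.sq_sqrt (by positivity), Fintype.sum_prod_type]
  simp only [Fin.sum_univ_two, Real.dist_eq, sq_abs]
  rfl

theorem continuous_re (i : Fin n) : Continuous fun x : Torus n => re x i := by
  unfold re; fun_prop

theorem continuous_im (i : Fin n) : Continuous fun x : Torus n => im x i := by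
  unfold im; fun_prop

theorem continuous_tmk {Y : Type*} [TopologicalSpace Y] {a b : Y → Fin n → ℝ}
    (ha : Continuous a) (hb : Continuous b) (h : ∀ y i, a y i ^ 2 + b y i ^ 2 = 1) :
    Continuous fun y => tmk (a y) (b y) (h y) := by
  unfold tmk
  refine Continuous.subtype_mk ?_ _
  refine (PiLp.continuous_toLp 2 _).comp (continuous_pi ?_)
  rintro ⟨i, j⟩
  fin_cases j
  · simpa [Function.comp_def] using (continuous_apply i).comp ha
  · simpa [Function.comp_def] using (continuous_apply i).comp hb

instance instMulT : Mul (Torus n) := ⟨fun x y =>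
  tmk (fun i => re x i * re y i - im x i * im y i) (fun i => re x i * im y i + im x i * re y i)
    (fun i => by
      linear_combination (re y i ^ 2 + im y i ^ 2) * re_im x i + re_im y i)⟩

instance instOneT : One (Torus n) := ⟨tmk (fun _ => 1) (fun _ => 0) (fun _ => by norm_num)⟩

instance instInvT : Inv (Torus n) := ⟨fun x => tmk (re x) (fun i => - im x i) (fun i => by
  linear_combination re_im x i)⟩

@[simp] theorem re_mul (x y : Torus n) (i : Fin n) :
    re (x * y) i = re x i * re y i - im x i * im y i := re_tmk _ _ _ _

@[simp] theorem im_mul (x y : Torus n) (i : Fin n) :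
    im (x * y) i = re x i * im y i + im x i * re y i := im_tmk _ _ _ _

@[simp] theorem re_one (i : Fin n) : re (1 : Torus n) i = 1 := re_tmk _ _ _ _

@[simp] theorem im_one (i : Fin n) : im (1 : Torus n) i = 0 := im_tmk _ _ _ _

@[simp] theorem re_inv (x : Torus n) (i : Fin n) : re x⁻¹ i = re x i := re_tmk _ _ _ _

@[simp] theorem im_inv (x : Torus n) (i : Fin n) : im x⁻¹ i = - im x i := im_tmk _ _ _ _

instance instGroupT : CommGroup (Torus n) where
  mul_assoc x y z := text (fun i => by simp; ring) (fun i => by simp; ring)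
  one_mul x := text (fun i => by simp) (fun i => by simp)
  mul_one x := text (fun i => by simp) (fun i => by simp)
  inv_mul_cancel x := text (fun i => by simp; linear_combination re_im x i)
    (fun i => by simp; ring)
  mul_comm x y := text (fun i => by simp; ring) (fun i => by simp; ring)

instance instContMulT : ContinuousMul (Torus n) := ⟨by
  have h0 := fun i => continuous_re (n := n) i
  have h1 := fun i => continuous_im (n := n) i
  refine continuous_tmk (Y := Torus n × Torus n)
    (a := fun p i => re p.1 i * re p.2 i - im p.1 i * im p.2 i)
    (b := fun p i => re p.1 i * im p.2 i + im p.1 i * re p.2 i) ?_ ?_ _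
  · refine continuous_pi fun i => ?_
    exact (((h0 i).comp continuous_fst).mul ((h0 i).comp continuous_snd)).sub
      (((h1 i).comp continuous_fst).mul ((h1 i).comp continuous_snd))
  · refine continuous_pi fun i => ?_
    exact (((h0 i).comp continuous_fst).mul ((h1 i).comp continuous_snd)).add
      (((h1 i).comp continuous_fst).mul ((h0 i).comp continuous_snd))⟩

instance instIsoT : IsIsometricSMul (Torus n) (Torus n) := ⟨fun g => by
  refine Isometry.of_dist_eq fun x y => ?_
  rw [← sq_eq_sq₀ dist_nonneg dist_nonneg, tdist, tdist]
  refine Finset.sum_congr rfl fun i _ => ?_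
  simp only [smul_eq_mul, re_mul, im_mul]
  linear_combination ((re x i - re y i) ^ 2 + (im x i - im y i) ^ 2) * re_im g i⟩

/-- The exponential parametrisation. -/
def tex (t : Fin n → ℝ) : Torus n :=
  tmk (fun i => Real.cos (t i)) (fun i => Real.sin (t i)) (fun i => Real.cos_sq_add_sin_sq _)

@[simp] theorem re_tex (t : Fin n → ℝ) (i : Fin n) : re (tex t) i = Real.cos (t i) := re_tmk _ _ _ _

@[simp] theorem im_tex (t : Fin n → ℝ) (i : Fin n) : im (tex t) i = Real.sin (t i) := im_tmk _ _ _ _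

theorem continuous_tex : Continuous (tex (n := n)) :=
  continuous_tmk (by fun_prop) (by fun_prop) _

theorem cos_sin_surj {a b : ℝ} (h : a ^ 2 + b ^ 2 = 1) :
    ∃ t, -Real.pi ≤ t ∧ t ≤ Real.pi ∧ Real.cos t = a ∧ Real.sin t = b := by
  set z : ℂ := ⟨a, b⟩ with hz
  have hn : ‖z‖ = 1 := by
    rw [← sq_eq_sq₀ (norm_nonneg _) zero_le_one, Complex.sq_norm, Complex.normSq_mk]
    linear_combination h
  have hz0 : z ≠ 0 := by rw [← norm_ne_zero_iff, hn]; exact one_ne_zero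
  refine ⟨z.arg, (Complex.neg_pi_lt_arg z).le, Complex.arg_le_pi z, ?_, ?_⟩
  · rw [Complex.cos_arg hz0, hn]; simp [hz]
  · rw [Complex.sin_arg, hn]; simp [hz]

theorem tex_surj (x : Torus n) : ∃ t : Fin n → ℝ, (∀ i, |t i| ≤ Real.pi) ∧ tex t = x := by
  choose t h1 h2 h3 h4 using fun i => cos_sin_surj (re_im x i)
  exact ⟨t, fun i => abs_le.2 ⟨h1 i, h2 i⟩, text (by simpa using h3) (by simpa using h4)⟩

theorem tex_surj_cube (x : Torus n) :
    ∃ t ∈ Metric.closedBall (0 : Fin n → ℝ) Real.pi, tex t = x := by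
  obtain ⟨t, h, e⟩ := tex_surj x
  refine ⟨t, ?_, e⟩
  rw [mem_closedBall_zero_iff, pi_norm_le_iff_of_nonneg Real.pi_pos.le]
  exact h

instance instCompactT : CompactSpace (Torus n) := by
  constructor
  have : (Set.univ : Set (Torus n)) = tex '' Metric.closedBall 0 Real.pi := by
    symm
    rw [Set.eq_univ_iff_forall]
    exact tex_surj_cube
  rw [this]
  exact (isCompact_closedBall _ _).image continuous_tex

instance instConnT : PreconnectedSpace (Torus n) :=
  (Function.Surjective.connectedSpace (f := tex (n := n))
    (fun x => let ⟨t, _, e⟩ := tex_surj x; ⟨t, e⟩) continuous_tex).toPreconnectedSpace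

theorem torus_far (hn : 2 ≤ n) (x : Torus n) : ∃ y, 1 ≤ dist y x := by
  refine ⟨tmk (fun i => - re x i) (fun i => - im x i) (fun i => by linear_combination re_im x i), ?_⟩
  rw [← sq_le_sq₀ zero_le_one dist_nonneg, tdist]
  simp only [re_tmk, im_tmk]
  have : ∀ i, (- re x i - re x i) ^ 2 + (- im x i - im x i) ^ 2 = 4 := by
    intro i
    linear_combination 4 * re_im x i
  simp only [this]
  simp
  have : (2 : ℝ) ≤ n := by exact_mod_cast hn
  linarith

instance instInvarT : (μH[(n : ℝ)] : Measure (Torus n)).IsMulLeftInvariant := ⟨fun g =>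
  ((IsometryEquiv.constSMul g).measurePreserving_hausdorffMeasure (n : ℝ)).map_eq⟩

theorem ball_eq_one (x : Torus n) (r : ℝ) :
    (μH[(n : ℝ)] : Measure (Torus n)) (Metric.ball x r) = μH[(n : ℝ)] (Metric.ball (1 : Torus n) r) := by
  have := measure_preimage_mul (μH[(n : ℝ)] : Measure (Torus n)) x (Metric.ball x r)
  rw [← this]
  congr 1
  ext y
  simp only [Set.mem_preimage, Metric.mem_ball]
  rw [show dist (x * y) x = dist y 1 by
    conv_lhs => rw [← mul_one x, mul_assoc, one_mul, dist_mul_left]]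

theorem coord_le_dist (x y : Torus n) (i : Fin n) :
    (re x i - re y i) ^ 2 + (im x i - im y i) ^ 2 ≤ dist x y ^ 2 := by
  rw [tdist]
  exact Finset.single_le_sum (f := fun i => (re x i - re y i) ^ 2 + (im x i - im y i) ^ 2)
    (fun i _ => by positivity) (Finset.mem_univ i)

theorem tex_lip : LipschitzWith (2 * n + 1 : ℕ) (tex (n := n)) := by
  refine LipschitzWith.of_dist_le_mul fun t s => ?_
  rw [← sq_le_sq₀ dist_nonneg (by positivity), tdist]
  have h : ∀ i, (re (tex t) i - re (tex s) i) ^ 2 + (im (tex t) i - im (tex s) i) ^ 2 ≤ 2 * dist t s ^ 2 := by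
    intro i
    simp only [re_tex, im_tex]
    have a1 : |Real.cos (t i) - Real.cos (s i)| ≤ dist t s := by
      refine (Real.abs_cos_sub_cos_le _ _).trans ?_
      rw [← Real.dist_eq]; exact dist_le_pi_dist t s i
    have a2 : |Real.sin (t i) - Real.sin (s i)| ≤ dist t s := by
      refine (Real.abs_sin_sub_sin_le _ _).trans ?_
      rw [← Real.dist_eq]; exact dist_le_pi_dist t s i
    have b1 := sq_le_sq' (by linarith [neg_abs_le (Real.cos (t i) - Real.cos (s i)), abs_nonneg (Real.cos (t i) - Real.cos (s i))] : -dist t s ≤ _) ((le_abs_self _).trans a1)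
    have b2 := sq_le_sq' (by linarith [neg_abs_le (Real.sin (t i) - Real.sin (s i)), abs_nonneg (Real.sin (t i) - Real.sin (s i))] : -dist t s ≤ _) ((le_abs_self _).trans a2)
    linarith
  refine (Finset.sum_le_sum fun i _ => h i).trans ?_
  simp
  rw [mul_pow]
  have h0 : (0 : ℝ) ≤ n := Nat.cast_nonneg n
  nlinarith [sq_nonneg (dist t s), mul_nonneg h0 (sq_nonneg (dist t s)), mul_nonneg (mul_nonneg h0 h0) (sq_nonneg (dist t s))]

theorem vol_cube (r : ℝ) (hr : 0 ≤ r) :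
    (μH[(n : ℝ)] : Measure (Fin n → ℝ)) (Metric.closedBall 0 r) = ENNReal.ofReal (2 * r) ^ n := by
  have := hausdorffMeasure_pi_real (ι := Fin n)
  rw [Fintype.card_fin] at this
  rw [this, Real.volume_pi_closedBall _ hr, Fintype.card_fin, ENNReal.ofReal_pow (by linarith)]

theorem torus_up {r : ℝ} (hr : 0 < r) : (μH[(n : ℝ)] : Measure (Torus n)) (Metric.ball 1 r) ≤
    (((2 * n + 1 : ℕ) : ℝ≥0∞) ^ n * 4 ^ n) * ENNReal.ofReal r ^ n := by
  have hsub : Metric.ball (1 : Torus n) r ⊆ tex '' Metric.closedBall 0 (2 * r) := by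
    intro x hx
    obtain ⟨t, ht, rfl⟩ := tex_surj x
    refine ⟨t, ?_, rfl⟩
    rw [mem_closedBall_zero_iff, pi_norm_le_iff_of_nonneg (by linarith)]
    intro i
    rw [Metric.mem_ball] at hx
    have h1 := coord_le_dist (tex t) 1 i
    simp only [re_tex, im_tex, re_one, im_one] at h1
    have h2 := Real.cos_le_one_sub_mul_cos_sq (ht i)
    have h3 : t i ^ 2 / 8 ≤ 2 / Real.pi ^ 2 * t i ^ 2 := by
      have : (1 : ℝ) / 8 ≤ 2 / Real.pi ^ 2 := by
        rw [div_le_div_iff₀ (by norm_num) (by positivity)]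
        nlinarith [Real.pi_pos, Real.pi_le_four]
      nlinarith [sq_nonneg (t i)]
    have h4 := Real.cos_sq_add_sin_sq (t i)
    have h5 : dist (tex t) 1 ^ 2 ≤ r ^ 2 := by gcongr
    rw [Real.norm_eq_abs]
    refine abs_le_of_sq_le_sq ?_ (by linarith)
    nlinarith
  refine (measure_mono hsub).trans ?_
  refine ((tex_lip (n := n)).hausdorffMeasure_image_le (Nat.cast_nonneg n) _).trans ?_
  rw [vol_cube _ (by linarith), ENNReal.rpow_natCast]
  refine le_of_eq ?_
  rw [mul_assoc, ← mul_pow 4]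
  congr 2
  rw [show 2 * (2 * r) = 4 * r by ring, ENNReal.ofReal_mul (by norm_num)]
  norm_num

theorem torus_low (hn : 1 ≤ n) {r : ℝ} (hr : 0 < r) (hr1 : r ≤ 1) :
    ENNReal.ofReal (1 / n) ^ n * ENNReal.ofReal r ^ n ≤
      (μH[(n : ℝ)] : Measure (Torus n)) (Metric.ball 1 r) := by
  have hn' : (1 : ℝ) ≤ n := by exact_mod_cast hn
  have hlip : LipschitzWith 1 (im (n := n)) := by
    refine LipschitzWith.of_dist_le_mul fun x y => ?_
    rw [NNReal.coe_one, one_mul, dist_pi_le_iff dist_nonneg]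
    intro i
    rw [Real.dist_eq]
    refine abs_le_of_sq_le_sq ?_ dist_nonneg
    have := coord_le_dist x y i
    nlinarith [sq_nonneg (re x i - re y i)]
  have hsub : Metric.closedBall (0 : Fin n → ℝ) (r / (2 * n)) ⊆ im '' Metric.ball (1 : Torus n) r := by
    intro a ha
    rw [mem_closedBall_zero_iff, pi_norm_le_iff_of_nonneg (by positivity)] at ha
    have h2 : ∀ i, a i ^ 2 ≤ (r / (2 * n)) ^ 2 := fun i => by
      rw [← sq_abs]; have := ha i; rw [Real.norm_eq_abs] at this; gcongr
    have h3 : (r / (2 * n)) ^ 2 ≤ 1 := by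
      refine pow_le_one₀ (by positivity) ?_
      rw [div_le_one (by positivity)]; linarith
    have h4 : ∀ i, 0 ≤ 1 - a i ^ 2 := fun i => by linarith [h2 i]
    refine ⟨tmk (fun i => Real.sqrt (1 - a i ^ 2)) a (fun i => by rw [Real.sq_sqrt (h4 i)]; ring), ?_, ?_⟩
    · rw [Metric.mem_ball, ← sq_lt_sq₀ dist_nonneg hr.le, tdist]
      have h5 : ∀ i, (Real.sqrt (1 - a i ^ 2) - 1) ^ 2 + (a i - 0) ^ 2 ≤ 2 * (r / (2 * n)) ^ 2 := by
        intro i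
        have e := Real.sq_sqrt (h4 i)
        have h6 : 1 - a i ^ 2 ≤ Real.sqrt (1 - a i ^ 2) := by
          refine Real.le_sqrt_of_sq_le ?_
          nlinarith [h4 i, sq_nonneg (a i)]
        nlinarith [h2 i]
      simp only [re_tmk, im_tmk, re_one, im_one]
      refine (Finset.sum_le_sum fun i _ => h5 i).trans_lt ?_
      simp only [Finset.sum_const, Finset.card_univ, Fintype.card_fin, nsmul_eq_mul]
      have : (n : ℝ) * (2 * (r / (2 * n)) ^ 2) = r ^ 2 / (2 * n) := by field_simp
      rw [this, div_lt_iff₀ (by positivity)]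
      nlinarith [sq_pos_of_pos hr]
    · funext i; simp
  have h := (hlip.hausdorffMeasure_image_le (Nat.cast_nonneg n) (Metric.ball (1 : Torus n) r))
  refine le_trans (le_of_eq ?_) ((measure_mono hsub).trans (h.trans (le_of_eq ?_)))
  · rw [vol_cube _ (by positivity), ← mul_pow, ← ENNReal.ofReal_mul (by positivity)]
    congr 2
    field_simp
  · simp

theorem torus_ahl (hn : 1 ≤ n) : Ahl (μH[(n : ℝ)] : Measure (Torus n)) n
    (ENNReal.ofReal (1 / n) ^ n) (((2 * n + 1 : ℕ) : ℝ≥0∞) ^ n * 4 ^ n) where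
  c_ne := by
    have : (0 : ℝ) < n := by exact_mod_cast hn
    refine pow_ne_zero _ ?_
    rw [ENNReal.ofReal_ne_zero_iff]
    positivity
  c_top := ENNReal.pow_ne_top ENNReal.ofReal_ne_top
  C_ne := ENNReal.mul_ne_top (ENNReal.pow_ne_top (ENNReal.natCast_ne_top _))
    (ENNReal.pow_ne_top (by norm_num))
  up x r hr := by rw [ball_eq_one]; exact torus_up hr
  low x r hr hr1 := by rw [ball_eq_one]; exact torus_low hn hr hr1

instance instFinT : IsFiniteMeasure (μH[(n : ℝ)] : Measure (Torus n)) := ⟨by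
  set r := Metric.diam (Set.univ : Set (Torus n)) + 1 with hr
  have hr0 : 0 < r := by have := Metric.diam_nonneg (s := (Set.univ : Set (Torus n))); linarith
  have hb : Metric.ball (1 : Torus n) r = Set.univ := by
    ext y
    simp only [Metric.mem_ball, Set.mem_univ, iff_true]
    have := Metric.dist_le_diam_of_mem (isCompact_univ (X := Torus n)).isBounded
      (Set.mem_univ y) (Set.mem_univ 1)
    linarith
  rw [← hb]
  refine (torus_up hr0).trans_lt ?_
  refine ENNReal.mul_lt_top (ENNReal.mul_lt_top ?_ ?_) ?_
  · exact ENNReal.pow_lt_top (ENNReal.natCast_lt_top _)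
  · exact ENNReal.pow_lt_top (by norm_num)
  · exact ENNReal.pow_lt_top ENNReal.ofReal_lt_top⟩

theorem energy_eq (hn : 1 ≤ n) {s : ℝ} (hs : 0 < s) (u : Torus n → Circ) :
    torusEnergy n s u = EF n ((n : ℝ) / s) (μH[(n : ℝ)] : Measure (Torus n))
      (fun x => (u x : EuclideanSpace ℝ (Fin 2))) Set.univ := by
  have hn0 : (0 : ℝ) < n := by exact_mod_cast hn
  have hp : 0 < (n : ℝ) / s := by positivity
  unfold torusEnergy EF
  rw [Measure.restrict_univ]
  refine lintegral_congr fun x => lintegral_congr fun y => ?_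
  unfold ff KK
  by_cases hxy : x = y
  · subst hxy
    simp [hp.ne', hp]
  · have hd : 0 < dist x y := dist_pos.2 hxy
    rw [ENNReal.ofReal_div_of_pos (by positivity),
      ← ENNReal.ofReal_rpow_of_nonneg (norm_nonneg _) hp.le, ofReal_norm,
      show (2 * (n : ℝ)) = ((2 * n : ℕ) : ℝ) by push_cast; ring, Real.rpow_natCast,
      ENNReal.ofReal_pow hd.le, ← edist_dist, div_eq_mul_inv, ENNReal.inv_pow]

end torus

end FracMin


namespace FracMin

section topo

variable {n : ℕ}

theorem homotopic_iff {X Y : Type*} [TopologicalSpace X] [TopologicalSpace Y] {f g : X → Y}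
    (hf : Continuous f) (hg : Continuous g) :
    Homotopic f g ↔ ContinuousMap.Homotopic (⟨f, hf⟩ : C(X, Y)) ⟨g, hg⟩ := by
  constructor
  · rintro ⟨H, hc, h0, h1⟩
    exact ⟨⟨⟨H, hc⟩, h0, h1⟩⟩
  · rintro ⟨H⟩
    exact ⟨H, H.continuous, H.apply_zero, H.apply_one⟩

theorem Homotopic.trans' {X Y : Type*} [TopologicalSpace X] [TopologicalSpace Y] {f g h : X → Y}
    (hf : Continuous f) (hg : Continuous g) (hh : Continuous h)
    (h1 : Homotopic f g) (h2 : Homotopic g h) : Homotopic f h := by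
  rw [homotopic_iff hf hg] at h1
  rw [homotopic_iff hg hh] at h2
  rw [homotopic_iff hf hh]
  exact h1.trans h2

theorem Homotopic.symm' {X Y : Type*} [TopologicalSpace X] [TopologicalSpace Y] {f g : X → Y}
    (hf : Continuous f) (hg : Continuous g) (h1 : Homotopic f g) : Homotopic g f := by
  rw [homotopic_iff hf hg] at h1
  rw [homotopic_iff hg hf]
  exact h1.symm

theorem const_of_exp {Y : Type*} [TopologicalSpace Y] [PreconnectedSpace Y] {D : Y → ℝ}
    (hD : Continuous D) (h : ∀ y, Circle.exp (D y) = 1) (y y' : Y) : D y = D y' := by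
  choose m hm using fun y => Circle.exp_eq_one.1 (h y)
  have hpi : (2 * Real.pi) ≠ 0 := by positivity
  have hc : Continuous m := by
    rw [Int.isClosedEmbedding_coe_real.isInducing.continuous_iff]
    have : ((fun k : ℤ => (k : ℝ)) ∘ m) = fun y => D y / (2 * Real.pi) := by
      funext y
      simp only [Function.comp]
      rw [hm y]
      field_simp
    rw [this]
    exact hD.div_const _
  have := PreconnectedSpace.constant (Y := ℤ) inferInstance hc (x := y) (y := y')
  rw [hm y, hm y', this]

theorem circ_sq (z : Circ) : z.1 0 ^ 2 + z.1 1 ^ 2 = 1 := by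
  have h : ‖z.1‖ = 1 := by simpa using z.2
  have h2 := EuclideanSpace.norm_sq_eq z.1
  rw [h, Fin.sum_univ_two] at h2
  simp only [Real.norm_eq_abs, sq_abs] at h2
  linarith

/-- The complex number of a point on the circle. -/
def toC (z : Circ) : Circle := ⟨⟨z.1 0, z.1 1⟩, by
  rw [Submonoid.unitSphere, ← SetLike.mem_coe]
  simp only [Submonoid.coe_set_mk, Subsemigroup.coe_set_mk, mem_sphere_zero_iff_norm]
  rw [← sq_eq_sq₀ (norm_nonneg _) zero_le_one, Complex.sq_norm, Complex.normSq_mk]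
  linear_combination circ_sq z⟩

theorem continuous_toC : Continuous toC := by
  refine Continuous.subtype_mk ?_ _
  have : (fun z : Circ => (⟨z.1 0, z.1 1⟩ : ℂ)) = fun z => (z.1 0 : ℂ) + (z.1 1 : ℂ) * Complex.I := by
    funext z; apply Complex.ext <;> simp
  rw [this]
  fun_prop

theorem toC_inj {z w : Circ} (h : toC z = toC w) : z = w := by
  have h' : (toC z : ℂ) = toC w := congrArg _ h
  apply Subtype.ext
  ext j
  fin_cases j
  · exact congrArg Complex.re h'
  · exact congrArg Complex.im h'

/-- Rotation of the circle. -/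
def rot (φ : ℝ) (z : Circ) : Circ :=
  ⟨!₂[Real.cos φ * z.1 0 - Real.sin φ * z.1 1, Real.cos φ * z.1 1 + Real.sin φ * z.1 0], by
    rw [mem_sphere_zero_iff_norm, ← sq_eq_sq₀ (norm_nonneg _) zero_le_one, EuclideanSpace.norm_sq_eq,
      Fin.sum_univ_two]
    simp only [Real.norm_eq_abs, sq_abs]
    simp
    linear_combination circ_sq z + (z.1 0 ^ 2 + z.1 1 ^ 2) * Real.cos_sq_add_sin_sq φ⟩

theorem continuous_rot {Y : Type*} [TopologicalSpace Y] {a : Y → ℝ} {z : Y → Circ}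
    (ha : Continuous a) (hz : Continuous z) : Continuous fun y => rot (a y) (z y) := by
  have hz' : Continuous fun y => (z y).1 := continuous_subtype_val.comp hz
  have h0 : Continuous fun y => (z y).1 0 := by fun_prop
  have h1 : Continuous fun y => (z y).1 1 := by fun_prop
  refine Continuous.subtype_mk ?_ _
  refine (PiLp.continuous_toLp 2 _).comp (continuous_pi fun j => ?_)
  fin_cases j
  · exact ((Real.continuous_cos.comp ha).mul h0).sub ((Real.continuous_sin.comp ha).mul h1)
  · exact ((Real.continuous_cos.comp ha).mul h1).add ((Real.continuous_sin.comp ha).mul h0)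

theorem toC_rot (φ : ℝ) (z : Circ) : toC (rot φ z) = Circle.exp φ * toC z := by
  apply Circle.ext
  rw [Circle.coe_mul, Circle.coe_exp]
  apply Complex.ext
  · simp [toC, rot, Complex.exp_re, Complex.exp_im]
  · simp [toC, rot, Complex.exp_re, Complex.exp_im]

theorem rot_zero (z : Circ) : rot 0 z = z := by
  apply toC_inj
  rw [toC_rot, Circle.exp_zero, one_mul]

theorem tex_add (t s : Fin n → ℝ) : tex (t + s) = tex t * tex s :=
  text (fun i => by simp [Real.cos_add]) (fun i => by simp [Real.sin_add]; ring)

theorem tex_eq {t s : Fin n → ℝ} (h : tex t = tex s) : ∃ m : Fin n → ℤ,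
    t = s + ∑ i, m i • (Pi.single i (2 * Real.pi) : Fin n → ℝ) := by
  have : ∀ i, ∃ m : ℤ, t i = s i + m * (2 * Real.pi) := by
    intro i
    rw [← Circle.exp_eq_exp]
    apply Circle.ext
    have h0 := congrArg (fun x => re x i) h
    have h1 := congrArg (fun x => im x i) h
    simp only [re_tex, im_tex] at h0 h1
    rw [Circle.coe_exp, Circle.coe_exp]
    apply Complex.ext
    · simpa [Complex.exp_re] using h0
    · simpa [Complex.exp_im] using h1
  choose m hm using this
  refine ⟨m, funext fun i => ?_⟩
  rw [hm i]
  simp [Finset.sum_apply, Pi.single_apply]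

set_option maxHeartbeats 1000000 in
/-- Two maps which agree off a ball of radius one are homotopic. -/
theorem homotopic_of_ball (hn : 2 ≤ n) {f g : Torus n → Circ} (hf : Continuous f) (hg : Continuous g)
    (x0 : Torus n) (h : ∀ z, z ∉ Metric.ball x0 1 → g z = f z) : Homotopic f g := by
  set w : C(Fin n → ℝ, Circle) := ⟨fun t => toC (g (tex t)) / toC (f (tex t)),
    (continuous_toC.comp (hg.comp continuous_tex)).div'
      (continuous_toC.comp (hf.comp continuous_tex))⟩ with hw
  obtain ⟨e0, he0⟩ := Circle.exp_surjective (w 0)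
  obtain ⟨ψ, ⟨-, hψ⟩, -⟩ := Circle.isCoveringMap_exp.existsUnique_continuousMap_lifts w 0 e0 he0
  have hψ' : ∀ t, Circle.exp (ψ t) = toC (g (tex t)) / toC (f (tex t)) := fun t => congrFun hψ t
  obtain ⟨a, -, ha⟩ := tex_surj x0
  have per1 : ∀ j, tex (Pi.single j (2 * Real.pi) : Fin n → ℝ) = 1 := by
    intro j
    refine text (fun i => ?_) (fun i => ?_)
    · by_cases hij : i = j
      · subst hij; simp
      · simp [hij]
    · by_cases hij : i = j
      · subst hij; simp
      · simp [hij]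
  have per : ∀ j t, ψ (t + Pi.single j (2 * Real.pi)) = ψ t := by
    intro j
    have c1 := const_of_exp (D := fun t => ψ (t + Pi.single j (2 * Real.pi)) - ψ t)
      (by fun_prop) (fun t => by
        rw [Circle.exp_sub, hψ', hψ', tex_add, per1, mul_one, div_self'])
    obtain ⟨k, hk⟩ : ∃ k : Fin n, k ≠ j := by
      have : Nontrivial (Fin n) := Fin.nontrivial_iff_two_le.2 hn
      exact exists_ne j
    set b : Fin n → ℝ := a + Pi.single k Real.pi with hb
    have c2 := const_of_exp (D := fun s : ℝ => ψ (b + Pi.single j s))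
      (ψ.continuous.comp (continuous_const.add (continuous_single (A := fun _ : Fin n => ℝ) j))) (fun s => by
        rw [hψ', h _ ?_, div_self']
        intro hmem
        rw [Metric.mem_ball] at hmem
        have h1 := coord_le_dist (tex (b + Pi.single j s)) x0 k
        rw [← ha] at h1 hmem
        have e : (b + (Pi.single j s : Fin n → ℝ)) k = a k + Real.pi := by simp [hb, hk]
        simp only [re_tex, im_tex, e, Real.cos_add_pi, Real.sin_add_pi] at h1
        have h2 := Real.cos_sq_add_sin_sq (a k)
        have h3 : dist (tex (b + Pi.single j s)) (tex a) ^ 2 ≤ 1 := pow_le_one₀ dist_nonneg hmem.le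
        nlinarith)
    intro t
    have e1 := c1 t b
    have e2 := c2 (2 * Real.pi) 0
    simp only [Pi.single_zero, add_zero] at e1 e2
    linarith
  set P : AddSubgroup (Fin n → ℝ) :=
    { carrier := {v | ∀ t, ψ (t + v) = ψ t}
      zero_mem' := fun t => by rw [add_zero]
      add_mem' := fun {v w} hv hw t => by rw [← add_assoc, hw, hv]
      neg_mem' := fun {v} hv t => by
        have := hv (t + -v)
        rw [neg_add_cancel_right] at this
        exact this.symm } with hP
  have hper : ∀ t s, tex t = tex s → ψ t = ψ s := by
    intro t s hts
    obtain ⟨m, rfl⟩ := tex_eq hts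
    have : ∑ i, m i • (Pi.single i (2 * Real.pi) : Fin n → ℝ) ∈ P :=
      sum_mem fun i _ => zsmul_mem (show _ ∈ P from fun t => per i t) _
    exact this s
  choose σ hσ hσe using tex_surj_cube (n := n)
  obtain ⟨φ, hφ⟩ : ∃ φ : Torus n → ℝ, ∀ x, φ x = ψ (σ x) := ⟨_, fun _ => rfl⟩
  have hφt : ∀ t, φ (tex t) = ψ t := fun t => (hφ _).trans (hper _ _ (hσe (tex t)))
  have hφc : Continuous φ := by
    haveI : CompactSpace (Metric.closedBall (0 : Fin n → ℝ) Real.pi) :=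
      isCompact_iff_compactSpace.1 (isCompact_closedBall _ _)
    have hq : Topology.IsQuotientMap
        (fun t : Metric.closedBall (0 : Fin n → ℝ) Real.pi => tex (n := n) t.1) :=
      Topology.IsQuotientMap.of_surjective_continuous
        (fun x => ⟨⟨σ x, hσ x⟩, hσe x⟩) (continuous_tex.comp continuous_subtype_val)
    rw [hq.continuous_iff]
    have : (φ ∘ fun t : Metric.closedBall (0 : Fin n → ℝ) Real.pi => tex (n := n) t.1) =
        fun t => ψ t.1 := funext fun t => hφt t.1
    rw [this]
    exact ψ.continuous.comp continuous_subtype_val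
  refine ⟨fun q => rot ((q.1 : ℝ) * φ q.2) (f q.2), ?_, ?_, ?_⟩
  · have k1 : Continuous fun q : unitInterval × Torus n => (q.1 : ℝ) * φ q.2 :=
      (continuous_subtype_val.comp continuous_fst).mul (hφc.comp continuous_snd)
    have k2 : Continuous fun q : unitInterval × Torus n => f q.2 := hf.comp continuous_snd
    exact continuous_rot k1 k2
  · intro x
    simp only [Set.Icc.coe_zero, zero_mul, rot_zero]
  · intro x
    simp only [Set.Icc.coe_one, one_mul]
    apply toC_inj
    rw [toC_rot]
    have := hψ' (σ x)
    rw [hσe] at this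
    rw [hφ, this, div_mul_cancel]

/-- The class of maps homotopic to `u₀`. -/
def HC (u₀ : Torus n → Circ) (u : Torus n → EuclideanSpace ℝ (Fin 2)) : Prop :=
  ∃ v : Torus n → Circ, Continuous v ∧ Homotopic v u₀ ∧ u = fun x => (v x).1

theorem HC_cls (hn : 2 ≤ n) {u₀ : Torus n → Circ} (hu₀ : Continuous u₀) : Cls 1 (HC u₀) where
  cont := by
    rintro u ⟨v, hv, -, rfl⟩
    exact continuous_subtype_val.comp hv
  unit := by
    rintro u ⟨v, hv, -, rfl⟩ z
    exact mem_sphere_zero_iff_norm.1 (v z).2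
  loc := by
    rintro u u' x0 ⟨v, hv, hh, rfl⟩ hc h1 he
    have hc' : Continuous fun z => (⟨u' z, mem_sphere_zero_iff_norm.2 (h1 z)⟩ : Circ) :=
      hc.subtype_mk _
    refine ⟨_, hc', ?_, rfl⟩
    exact Homotopic.trans' hc' hv hu₀ (homotopic_of_ball hn hc' hv x0 fun z hz =>
      Subtype.ext (he z hz).symm) hh
  homot := by
    rintro u H ⟨v, hv, hh, rfl⟩ hc h1 h0
    have hc' : Continuous fun z => (⟨H z, mem_sphere_zero_iff_norm.2 (h1 z)⟩ : Circ) :=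
      hc.subtype_mk _
    have hc1 : Continuous fun x => (⟨H (1, x), mem_sphere_zero_iff_norm.2 (h1 _)⟩ : Circ) :=
      hc'.comp (Continuous.prodMk continuous_const continuous_id)
    refine ⟨_, hc1, Homotopic.trans' hc1 hv hu₀ (Homotopic.symm' hv hc1 ?_) hh, rfl⟩
    exact ⟨_, hc', fun x => Subtype.ext (h0 x), fun x => rfl⟩

end topo

end FracMin

/-- every homotopy class of continuous maps `𝕋ⁿ → 𝕊¹` contains a continuous
map of finite `E_{s,n/s}`-energy minimizing the energy in the class. -/
theorem stmt14 (n : ℕ) (hn : 2 ≤ n) (s : ℝ) (hs : 0 < s) (hs1 : s < 1)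
    (u₀ : Torus n → Circ) (hu₀ : Continuous u₀) :
    ∃ u : Torus n → Circ, Continuous u ∧ Homotopic u u₀ ∧
      torusEnergy n s u < ⊤ ∧
      (∀ v : Torus n → Circ, Continuous v → Homotopic v u₀ →
        torusEnergy n s u ≤ torusEnergy n s v) := by
  have hn2 : (2 : ℝ) ≤ n := by exact_mod_cast hn
  have hp : (n : ℝ) < (n : ℝ) / s := by
    rw [lt_div_iff₀ hs]
    nlinarith
  obtain ⟨W, ⟨u, hu, hh, rfl⟩, hE, hmin⟩ := FracMin.Cls.exists_min one_pos le_rfl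
    (FracMin.HC_cls hn hu₀) (FracMin.torus_ahl (by omega)) hp (by linarith)
    (FracMin.torus_far hn) (u₀ := fun x => (u₀ x).1)
    ⟨u₀, hu₀, ⟨fun q => u₀ q.2, hu₀.comp continuous_snd, fun _ => rfl, fun _ => rfl⟩, rfl⟩
  refine ⟨u, hu, hh, ?_, ?_⟩
  · rw [FracMin.energy_eq (by omega) hs]
    exact hE
  · intro v hv hvh
    rw [FracMin.energy_eq (by omega) hs, FracMin.energy_eq (by omega) hs]
    exact hmin _ ⟨v, hv, hvh, rfl⟩
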